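/- arXiv:2110.15523 — 7 statements merged into one kernel-verified Lean document; each statement's English description precedes it below -/
import Mathlib

section
/- Let N ≥ 1, m ≥ 3, and let φ : V → ℂ satisfy L(B_N)φ = λφ together with φ(𝟘) = φ(𝟙) = 0, where 𝟘 and 𝟙 are the all-zeros and all-ones vertices. Then for every k ∈ ZMod m the extension-by-zero ι_k φ satisfies L(B_N ⊢ C_m)(ι_k φ) = λ · ι_k φ, and ι_k φ vanishes outside the k-th cube block. -/
open Complex Finset
open scoped Real Classical

noncomputable section

/-- Vertices of the Boolean cube B_N. -/
abbrev Vtx (N : ℕ) := Fin N → ZMod 2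

/-- The all-zeros vertex 𝟘. -/
def vZero (N : ℕ) : Vtx N := fun _ => 0

/-- The all-ones vertex 𝟙. -/
def vOne (N : ℕ) : Vtx N := fun _ => 1

/-- Cube adjacency: differ in exactly one coordinate. -/
def cubeAdj {N : ℕ} (v w : Vtx N) : Prop :=
  (Finset.univ.filter fun i => v i ≠ w i).card = 1

instance {N : ℕ} (v w : Vtx N) : Decidable (cubeAdj v w) := by
  unfold cubeAdj; infer_instance

/-- Unnormalized Laplacian of the Boolean cube. -/
def cubeLap (N : ℕ) (f : Vtx N → ℂ) : Vtx N → ℂ :=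
  fun v => ∑ w ∈ Finset.univ.filter (fun w => cubeAdj v w), (f v - f w)

/-- Adjacency in the vertex-substitution graph B_N ⊢ C_m: within-cube edges,
plus (𝟙,k) ~ (𝟘,k+1) for every k. -/
def subAdj (N m : ℕ) (x y : Vtx N × ZMod m) : Prop :=
  (x.2 = y.2 ∧ cubeAdj x.1 y.1) ∨
    (x.1 = vOne N ∧ y.1 = vZero N ∧ y.2 = x.2 + 1) ∨
    (x.1 = vZero N ∧ y.1 = vOne N ∧ x.2 = y.2 + 1)

instance (N m : ℕ) (x y : Vtx N × ZMod m) : Decidable (subAdj N m x y) := by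
  unfold subAdj; infer_instance

/-- Unnormalized Laplacian of B_N ⊢ C_m. -/
def subLap (N m : ℕ) [NeZero m] (f : Vtx N × ZMod m → ℂ) : Vtx N × ZMod m → ℂ :=
  fun x => ∑ y ∈ Finset.univ.filter (fun y => subAdj N m x y), (f x - f y)

/-- Extension by zero ι_k of a cube vertex function to B_N ⊢ C_m. -/
def iota {N m : ℕ} (k : ZMod m) (g : Vtx N → ℂ) : Vtx N × ZMod m → ℂ :=
  fun x => if x.2 = k then g x.1 else 0

/-- a Dirichlet eigenvector of L(B_N) extends by zero to an
eigenvector of L(B_N ⊢ C_m) with the same eigenvalue, vanishing outside the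
k-th cube block. -/
theorem stmt2 (N m : ℕ) [NeZero m] (hN : 1 ≤ N) (hm : 3 ≤ m)
    (φ : Vtx N → ℂ) (lam : ℂ)
    (heig : cubeLap N φ = fun v => lam * φ v)
    (h0 : φ (vZero N) = 0) (h1 : φ (vOne N) = 0) (k : ZMod m) :
    subLap N m (iota k φ) = (fun x => lam * iota k φ x) ∧
    ∀ (u : Vtx N) (l : ZMod m), l ≠ k → iota k φ (u, l) = 0 := by
  have z0 : ∀ l : ZMod m, iota k φ (vZero N, l) = 0 := by
    intro l; simp [iota, h0]
  have z1 : ∀ l : ZMod m, iota k φ (vOne N, l) = 0 := by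
    intro l; simp [iota, h1]
  refine ⟨?_, fun u l h => by simp [iota, h]⟩
  funext x
  obtain ⟨u, l⟩ := x
  have key : subLap N m (iota k φ) (u, l)
      = ∑ w ∈ Finset.univ.filter (fun w => cubeAdj u w),
          (iota k φ (u, l) - iota k φ (w, l)) := by
    have hinj : Function.Injective (fun w : Vtx N => (w, l)) := fun a b h => by
      simpa using h
    refine Eq.trans ?_ (Finset.sum_map (Finset.univ.filter (fun w => cubeAdj u w)) ⟨_, hinj⟩
      (fun y => iota k φ (u, l) - iota k φ y))
    unfold subLap
    symm
    apply Finset.sum_subset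
    · intro y hy
      simp only [Finset.mem_map, Finset.mem_filter, Finset.mem_univ, true_and,
        Function.Embedding.coeFn_mk] at hy ⊢
      obtain ⟨w, hw, rfl⟩ := hy
      exact Or.inl ⟨rfl, hw⟩
    · rintro ⟨w, j⟩ hy hn
      simp only [Finset.mem_map, Finset.mem_filter, Finset.mem_univ, true_and,
        Function.Embedding.coeFn_mk] at hy hn
      rcases hy with ⟨h, h'⟩ | ⟨h, h', -⟩ | ⟨h, h', -⟩
      · simp only at h h'
        subst h
        exact absurd ⟨w, h', rfl⟩ hn
      · simp only at h h'
        subst h h'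
        rw [z0, z1, sub_zero]
      · simp only at h h'
        subst h h'
        rw [z0, z1, sub_zero]
  rw [key]
  by_cases hl : l = k
  · have := congrFun heig u
    simp only [iota, hl, if_true]
    exact this
  · simp [iota, hl]
end
end

section
/- Let 0 < K < N and m ≥ 3. The span in ℓ²(V × ZMod m) of all Dirichlet-type 2K-eigenvectors of L(B_N ⊢ C_m) — that is, of all functions ι_k φ where k ∈ ZMod m and φ is a 2K-eigenvector of L(B_N) vanishing at both the all-zeros vertex 𝟘 and the all-ones vertex 𝟙 — has dimension m·(binom(N,K) − 1). -/
open Complex Finset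
open scoped Real Classical

noncomputable section

def sgn2 (x : ZMod 2) : ℂ := if x = 0 then 1 else -1

lemma sgn2_add (x y : ZMod 2) : sgn2 (x + y) = sgn2 x * sgn2 y := by
  have h : (1 : ZMod 2) + 1 = 0 := by decide
  have h1 : (1 : ZMod 2) ≠ 0 := by decide
  have key : ∀ z : ZMod 2, z = 0 ∨ z = 1 := by decide
  rcases key x with rfl | rfl <;> rcases key y with rfl | rfl <;> simp [sgn2, h]

def chi {N : ℕ} (S : Finset (Fin N)) : Multiplicative (Vtx N) →* ℂ where
  toFun v := ∏ i ∈ S, sgn2 (v.toAdd i)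
  map_one' := by simp [sgn2]
  map_mul' x y := by
    rw [← Finset.prod_mul_distrib]
    exact Finset.prod_congr rfl fun i _ => sgn2_add _ _

def chiF {N : ℕ} (S : Finset (Fin N)) : Vtx N → ℂ := fun v => ∏ i ∈ S, sgn2 (v i)

lemma chiF_single {N : ℕ} (S : Finset (Fin N)) (i : Fin N) :
    chiF S (Pi.single i 1) = if i ∈ S then -1 else 1 := by
  have : ∀ j ∈ S, sgn2 ((Pi.single i 1 : Vtx N) j) = if i = j then -1 else 1 := by
    intro j _
    by_cases h : i = j
    · subst h; simp [sgn2]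
    · have h' : j ≠ i := fun e => h e.symm
      simp [sgn2, h, h']
  unfold chiF
  rw [Finset.prod_congr rfl this]
  simp

lemma chiF_add {N : ℕ} (S : Finset (Fin N)) (v w : Vtx N) :
    chiF S (v + w) = chiF S v * chiF S w := by
  unfold chiF
  rw [← Finset.prod_mul_distrib]
  exact Finset.prod_congr rfl fun i _ => sgn2_add _ _

lemma chi_inj {N : ℕ} : Function.Injective (chi (N := N)) := by
  intro S T h
  ext i
  have h1 : chiF S (Pi.single i 1) = chiF T (Pi.single i 1) :=
    DFunLike.congr_fun h (Multiplicative.ofAdd (Pi.single i 1 : Vtx N))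
  rw [chiF_single, chiF_single] at h1
  by_cases a : i ∈ S <;> by_cases b : i ∈ T <;> simp [a, b] at h1 ⊢ <;> norm_num at h1

lemma chiF_li {N : ℕ} : LinearIndependent ℂ (chiF (N := N)) := by
  have := (linearIndependent_monoidHom (Multiplicative (Vtx N)) ℂ).comp chi chi_inj
  exact this

lemma chiF_basis {N : ℕ} (f : Vtx N → ℂ) : ∃ c : Finset (Fin N) → ℂ, ∑ S, c S • chiF S = f := by
  have hs := (chiF_li (N := N)).span_eq_top_of_card_eq_finrank (by simp [ZMod.card])
  have : f ∈ Submodule.span ℂ (Set.range (chiF (N := N))) := by rw [hs]; trivial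
  exact (Submodule.mem_span_range_iff_exists_fun ℂ).1 this

lemma cubeLap_eq {N : ℕ} (f : Vtx N → ℂ) (v : Vtx N) :
    cubeLap N f v = ∑ i, (f v - f (v + Pi.single i 1)) := by
  unfold cubeLap
  symm
  have key : ∀ a b : ZMod 2, a ≠ b → b = a + 1 := by decide
  have h1 : (1 : ZMod 2) ≠ 0 := by decide
  refine Finset.sum_bij (fun i _ => v + Pi.single i 1) ?_ ?_ ?_ ?_
  · intro i _
    refine Finset.mem_filter.2 ⟨Finset.mem_univ _, ?_⟩
    unfold cubeAdj
    rw [Finset.card_eq_one]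
    refine ⟨i, ?_⟩
    ext j
    by_cases h : j = i
    · subst h; simp
    · simp [h]
  · intro i _ j _ h
    have h2 := congrFun (add_left_cancel h) i
    by_contra hne
    simp [hne] at h2
  · intro w hw
    replace hw := (Finset.mem_filter.1 hw).2
    unfold cubeAdj at hw
    rw [Finset.card_eq_one] at hw
    obtain ⟨i, hi⟩ := hw
    refine ⟨i, Finset.mem_univ _, ?_⟩
    funext j
    have hj : v j ≠ w j ↔ j = i := by
      have := Finset.ext_iff.1 hi j
      simpa using this
    by_cases h : j = i
    · subst h
      simp [key _ _ (hj.2 rfl)]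
    · have : v j = w j := by by_contra h'; exact h (hj.1 h')
      simp [h, this]
  · intro i _; rfl

def cubeLapL (N : ℕ) : (Vtx N → ℂ) →ₗ[ℂ] (Vtx N → ℂ) where
  toFun := cubeLap N
  map_add' f g := by
    funext v
    simp only [cubeLap_eq, Pi.add_apply, ← Finset.sum_add_distrib]
    exact Finset.sum_congr rfl fun i _ => by ring
  map_smul' c f := by
    funext v
    simp only [cubeLap_eq, Pi.smul_apply, smul_eq_mul, RingHom.id_apply, Finset.mul_sum]
    exact Finset.sum_congr rfl fun i _ => by ring

lemma cubeLap_chi {N : ℕ} (S : Finset (Fin N)) :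
    cubeLapL N (chiF S) = (2 * (S.card : ℂ)) • chiF S := by
  funext v
  change cubeLap N (chiF S) v = _
  rw [cubeLap_eq]
  have : ∀ i ∈ (Finset.univ : Finset (Fin N)), chiF S v - chiF S (v + Pi.single i 1)
      = if i ∈ S then 2 * chiF S v else 0 := by
    intro i _
    rw [chiF_add, chiF_single]
    split_ifs <;> ring
  rw [Finset.sum_congr rfl this]
  simp
  ring

lemma chiF_zero {N : ℕ} (S : Finset (Fin N)) : chiF S (vZero N) = 1 := by
  simp [chiF, vZero, sgn2]

lemma chiF_one {N : ℕ} (S : Finset (Fin N)) : chiF S (vOne N) = (-1) ^ S.card := by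
  simp [chiF, vOne, sgn2]

def WW (N K : ℕ) : Submodule ℂ (Vtx N → ℂ) where
  carrier := {φ | cubeLap N φ = (fun v => ((2 * K : ℕ) : ℂ) * φ v) ∧
          φ (vZero N) = 0 ∧ φ (vOne N) = 0}
  add_mem' := by
    rintro a b ⟨h1, h2, h3⟩ ⟨k1, k2, k3⟩
    refine ⟨?_, by simp [h2, k2], by simp [h3, k3]⟩
    have := (cubeLapL N).map_add a b
    change cubeLap N (a + b) = cubeLap N a + cubeLap N b at this
    rw [this, h1, k1]; funext v; simp; ring
  zero_mem' := by
    refine ⟨?_, rfl, rfl⟩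
    have := (cubeLapL N).map_zero
    change cubeLap N 0 = 0 at this
    rw [this]; funext v; simp
  smul_mem' := by
    rintro c a ⟨h1, h2, h3⟩
    refine ⟨?_, by simp [h2], by simp [h3]⟩
    have := (cubeLapL N).map_smul c a
    change cubeLap N (c • a) = c • cubeLap N a at this
    rw [this, h1]; funext v; simp; ring

abbrev KSub (N K : ℕ) := {S : Finset (Fin N) // S.card = K}

def sumF (N K : ℕ) : (KSub N K → ℂ) →ₗ[ℂ] ℂ := ∑ S, LinearMap.proj S

def AA (N K : ℕ) : (KSub N K → ℂ) →ₗ[ℂ] (Vtx N → ℂ) :=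
  Fintype.linearCombination ℂ (fun S : KSub N K => chiF S.1)

lemma AA_inj (N K : ℕ) : Function.Injective (AA N K) := by
  have : LinearIndependent ℂ (fun S : KSub N K => chiF S.1) :=
    chiF_li.comp _ Subtype.val_injective
  exact this.fintypeLinearCombination_injective

lemma WW_eq (N K : ℕ) : WW N K = (LinearMap.ker (sumF N K)).map (AA N K) := by
  ext φ
  constructor
  · rintro ⟨h1, h2, h3⟩
    obtain ⟨c, hc⟩ := chiF_basis φ
    have hz : ∀ S, S.card ≠ K → c S = 0 := by
      have e : ∑ S, (2 * ((S.card : ℂ) - K) * c S) • chiF (N := N) S = 0 := by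
        have e1 : cubeLapL N φ = (2 * (K : ℂ)) • φ := by
          change cubeLap N φ = _
          rw [h1]; funext v; simp
        rw [← hc, map_sum, Finset.smul_sum, ← sub_eq_zero, ← Finset.sum_sub_distrib] at e1
        rw [← e1]
        refine Finset.sum_congr rfl fun S _ => ?_
        rw [map_smul, cubeLap_chi, smul_smul, smul_smul, ← sub_smul]
        congr 1; ring
      intro S hS
      have := Fintype.linearIndependent_iff.1 chiF_li _ e S
      have h : (S.card : ℂ) - K ≠ 0 := by
        rw [sub_ne_zero]; exact_mod_cast hS
      simpa [h] using this
    have hsum : ∀ (M : Type) [AddCommMonoid M] [Module ℂ M] (g : Finset (Fin N) → M),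
        ∑ S : KSub N K, c S.1 • g S.1 = ∑ S, c S • g S := by
      intro M _ _ g
      refine Finset.sum_bij_ne_zero (fun S _ _ => S.1) (fun _ _ _ => Finset.mem_univ _)
        (fun _ _ _ _ _ _ h => Subtype.ext h) ?_ (fun _ _ _ => rfl)
      intro S _ hS
      have : S.card = K := by
        by_contra h
        exact hS (by rw [hz S h, zero_smul])
      exact ⟨⟨S, this⟩, Finset.mem_univ _, hS, rfl⟩
    refine ⟨fun S => c S.1, ?_, ?_⟩
    · have := hsum ℂ (fun _ => 1)
      rw [← hc] at h2
      simp [Finset.sum_apply, chiF_zero] at h2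
      simp at this
      simp [sumF, this, h2]
    · rw [← hc, ← hsum, AA, Fintype.linearCombination_apply]
  · rintro ⟨c, hc, rfl⟩
    have hc' : ∑ S, c S = 0 := by simpa [sumF] using hc
    refine ⟨?_, ?_, ?_⟩
    · change cubeLapL N _ = _
      rw [AA, Fintype.linearCombination_apply, map_sum]
      funext v
      simp only [map_smul, cubeLap_chi, Finset.sum_apply, Pi.smul_apply, smul_eq_mul,
        Finset.mul_sum]
      refine Finset.sum_congr rfl fun S _ => ?_
      rw [S.2]; push_cast; ring
    · simp [AA, Fintype.linearCombination_apply, chiF_zero, hc']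
    · simp only [AA, Fintype.linearCombination_apply, Finset.sum_apply, Pi.smul_apply, chiF_one,
        smul_eq_mul]
      have : ∀ S ∈ (Finset.univ : Finset (KSub N K)),
          c S * (-1) ^ S.1.card = c S * (-1) ^ K := fun S _ => by rw [S.2]
      rw [Finset.sum_congr rfl this, ← Finset.sum_mul, hc', zero_mul]

lemma finrank_WW (N K : ℕ) (h : K < N) : Module.finrank ℂ (WW N K) = N.choose K - 1 := by
  rw [WW_eq, ← (Submodule.equivMapOfInjective (AA N K) (AA_inj N K) _).finrank_eq]
  have hne : sumF N K ≠ 0 := by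
    intro h0
    obtain ⟨S, -, hS⟩ := Finset.exists_subset_card_eq
      (s := (Finset.univ : Finset (Fin N))) (n := K) (by simpa using h.le)
    have := LinearMap.congr_fun h0 (Pi.single ⟨S, hS⟩ 1)
    simp [sumF] at this
  have h1 := Module.Dual.finrank_ker_add_one_of_ne_zero hne
  have h2 : Module.finrank ℂ (KSub N K → ℂ) = N.choose K := by
    simp [Fintype.card_finset_len]
  omega

def PhiL (N K m : ℕ) : (ZMod m → WW N K) →ₗ[ℂ] (Vtx N × ZMod m → ℂ) where
  toFun g x := (g x.2).1 x.1
  map_add' _ _ := rfl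
  map_smul' _ _ := rfl

lemma PhiL_inj (N K m : ℕ) : Function.Injective (PhiL N K m) := by
  intro a b h
  funext k
  ext v
  exact congrFun h (v, k)

/-- the span of all Dirichlet-type 2K-eigenvectors of
L(B_N ⊢ C_m) — all ι_k φ with φ a 2K-eigenvector of L(B_N) vanishing at 𝟘
and 𝟙 — has dimension m·(binom(N,K) − 1). -/
theorem stmt4 (N K m : ℕ) [NeZero m] (hK : 0 < K) (hKN : K < N) (hm : 3 ≤ m) :
    Module.finrank ℂ
      ↥(Submodule.span ℂ
        {F : Vtx N × ZMod m → ℂ | ∃ (k : ZMod m) (φ : Vtx N → ℂ),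
          cubeLap N φ = (fun v => ((2 * K : ℕ) : ℂ) * φ v) ∧
          φ (vZero N) = 0 ∧ φ (vOne N) = 0 ∧ F = iota k φ}) =
      m * (N.choose K - 1) := by
  have hspan : Submodule.span ℂ
        {F : Vtx N × ZMod m → ℂ | ∃ (k : ZMod m) (φ : Vtx N → ℂ),
          cubeLap N φ = (fun v => ((2 * K : ℕ) : ℂ) * φ v) ∧
          φ (vZero N) = 0 ∧ φ (vOne N) = 0 ∧ F = iota k φ} = LinearMap.range (PhiL N K m) := by
    apply le_antisymm
    · rw [Submodule.span_le]
      rintro F ⟨k, φ, h1, h2, h3, rfl⟩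
      refine ⟨fun l => if l = k then ⟨φ, h1, h2, h3⟩ else 0, ?_⟩
      funext x
      by_cases h : x.2 = k <;> simp [PhiL, iota, h]
    · rintro _ ⟨g, rfl⟩
      have : PhiL N K m g = ∑ k, iota k (g k).1 := by
        funext x
        simp [PhiL, iota, Finset.sum_apply]
      rw [this]
      refine Submodule.sum_mem _ fun k _ => Submodule.subset_span ?_
      exact ⟨k, _, (g k).2.1, (g k).2.2.1, (g k).2.2.2, rfl⟩
  rw [hspan, LinearMap.finrank_range_of_inj (PhiL_inj N K m), Module.finrank_pi_fintype]
  simp [finrank_WW N K hKN, ZMod.card]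
end
end

section
/- Let N ≥ 1, m ≥ 3, ν ∈ {0,1,…,m−1}, and set α = e^{2πiν/m}. If f : V → ℂ satisfies L_α f = λ f, where L_α = L(B_N) + C_α is the augmented Laplacian, then the function φ on V × ZMod m defined by φ(u,k) = e^{2πiνk/m} f(u) satisfies L(B_N ⊢ C_m)φ = λ φ. -/
open Complex Finset
open scoped Real Classical

noncomputable section

/-- The corner operator C_α. -/
def corner (N : ℕ) (α : ℂ) (f : Vtx N → ℂ) : Vtx N → ℂ :=
  fun v =>
    if v = vZero N then f (vZero N) - f (vOne N) / α
    else if v = vOne N then f (vOne N) - α * f (vZero N)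
    else 0

/-- The augmented Laplacian L_α = L(B_N) + C_α. -/
def augLap (N : ℕ) (α : ℂ) (f : Vtx N → ℂ) : Vtx N → ℂ :=
  fun v => cubeLap N f v + corner N α f v

lemma vZero_ne_vOne (N : ℕ) (hN : 1 ≤ N) : vZero N ≠ vOne N := by
  intro h
  have := congrFun h ⟨0, hN⟩
  simp [vZero, vOne] at this

lemma e_succ (m : ℕ) [NeZero m] (hm : 3 ≤ m) (ν : ℕ) (k : ZMod m) :
    Complex.exp (2 * (π : ℂ) * Complex.I * ν * (k + 1).val / m) =
      Complex.exp (2 * (π : ℂ) * Complex.I * ν / m) *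
        Complex.exp (2 * (π : ℂ) * Complex.I * ν * k.val / m) := by
  have hm0 : (m : ℂ) ≠ 0 := Nat.cast_ne_zero.mpr (by omega)
  rw [← Complex.exp_add]
  haveI : Fact (1 < m) := ⟨by omega⟩
  by_cases h : k.val + 1 < m
  · rw [ZMod.val_add_of_lt (by rwa [ZMod.val_one]), ZMod.val_one]
    congr 1
    push_cast
    ring
  · have hk : k.val + 1 = m := by have := ZMod.val_lt k; omega
    have h0 : (k + 1).val = 0 := by
      rw [ZMod.val_add, ZMod.val_one, hk, Nat.mod_self]
    have hk' : (k.val : ℂ) + 1 = m := by exact_mod_cast hk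
    have : 2 * (π : ℂ) * Complex.I * ν / m + 2 * (π : ℂ) * Complex.I * ν * k.val / m
        = ν * (2 * π * Complex.I) := by
      field_simp
      rw [← hk']
      ring
    rw [this, h0, Complex.exp_nat_mul_two_pi_mul_I]
    simp

/-- extra neighbours -/
def extra (N m : ℕ) (u : Vtx N) (k : ZMod m) : Finset (Vtx N × ZMod m) :=
  if u = vZero N then {(vOne N, k - 1)}
  else if u = vOne N then {(vZero N, k + 1)} else ∅

lemma filter_subAdj (N m : ℕ) [NeZero m] (hN : 1 ≤ N) (u : Vtx N) (k : ZMod m) :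
    Finset.univ.filter (fun y => subAdj N m (u, k) y) =
      ((Finset.univ.filter (fun w => cubeAdj u w)) ×ˢ {k}) ∪ extra N m u k := by
  have h01 := vZero_ne_vOne N hN
  ext ⟨w, l⟩
  simp only [mem_filter, mem_univ, true_and, mem_union, mem_product, mem_singleton, subAdj, extra]
  by_cases h0 : u = vZero N
  · simp only [h0, h01, if_true, mem_singleton, Prod.mk.injEq, false_and, false_or, true_and,
      eq_sub_iff_add_eq]
    grind
  · by_cases h1 : u = vOne N
    · simp only [h1, h01.symm, if_true, if_false, mem_singleton, Prod.mk.injEq, false_and, or_false,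
        true_and]
      grind
    · simp only [h0, h1, if_false, false_and, or_false, notMem_empty]
      grind

lemma disj_extra (N m : ℕ) [NeZero m] (hm : 3 ≤ m) (u : Vtx N) (k : ZMod m) :
    Disjoint ((Finset.univ.filter (fun w => cubeAdj u w)) ×ˢ {k}) (extra N m u k) := by
  haveI : Fact (1 < m) := ⟨by omega⟩
  rw [Finset.disjoint_left]
  rintro ⟨w, l⟩ h1 h2
  simp only [mem_product, mem_singleton] at h1
  unfold extra at h2
  have := h1.2
  subst this
  split_ifs at h2 <;> simp [eq_sub_iff_add_eq] at h2

/-- if L_α f = λf with α = e^{2πiν/m}, then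
φ(u,k) = e^{2πiνk/m} f(u) satisfies L(B_N ⊢ C_m)φ = λφ. -/
theorem stmt8 (N m : ℕ) [NeZero m] (hN : 1 ≤ N) (hm : 3 ≤ m)
    (ν : ℕ) (hν : ν < m) (f : Vtx N → ℂ) (lam : ℂ)
    (heig : augLap N (Complex.exp (2 * (π : ℂ) * Complex.I * ν / m)) f =
      fun v => lam * f v) :
    subLap N m
        (fun x => Complex.exp (2 * (π : ℂ) * Complex.I * ν * x.2.val / m) * f x.1) =
      fun x => lam *
        (Complex.exp (2 * (π : ℂ) * Complex.I * ν * x.2.val / m) * f x.1) := by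
  have h01 := vZero_ne_vOne N hN
  funext ⟨u, k⟩
  have hu := congrFun heig u
  simp only [augLap, cubeLap, corner] at hu
  simp only [subLap]
  rw [filter_subAdj N m hN, Finset.sum_union (disj_extra N m hm u k), Finset.sum_product]
  simp only [Finset.sum_singleton, ← mul_sub, ← Finset.mul_sum]
  have hα : Complex.exp (2 * (π : ℂ) * Complex.I * ν / m) ≠ 0 := Complex.exp_ne_zero _
  rw [mul_left_comm, ← hu, mul_add]
  congr 1
  unfold extra
  split_ifs with h0 h1
  · have hs := e_succ m hm ν (k - 1)
    rw [sub_add_cancel] at hs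
    rw [Finset.sum_singleton, hs, h0]
    field_simp
  · rw [Finset.sum_singleton, e_succ m hm, h1]
    ring
  · simp
end
end

section
/- Let N ≥ 1 and m ≥ 3. Suppose that d_1, …, d_{2^N − N − 1} are eigenvectors of L(B_N), each vanishing at both 𝟘 and 𝟙, which form a basis of the orthogonal complement of the Neumann subspace span{h_{n,0},…,h_{n,N}} in ℓ²(V); and suppose that for each ν ∈ {0,…,m−1}, with α_ν = e^{2πiν/m}, the vectors f_{ν,0}, …, f_{ν,N} are nonzero, pairwise orthogonal eigenvectors of the augmented Laplacian L_{α_ν} lying in the Neumann subspace. Then the m·(2^N − N − 1) Dirichlet-type functions ι_k d_j (k ∈ ZMod m) together with the m·(N+1) Neumann-type functions Φ_{ν,i}(u,k) = e^{2πiνk/m} f_{ν,i}(u) are all eigenvectors of L(B_N ⊢ C_m), and together these m·2^N functions form a basis of ℓ²(V × ZMod m). -/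
open Complex Finset
open scoped Real Classical

noncomputable section

/-- The inner product on ℓ²: ⟨f,g⟩ = Σ f·conj(g). -/
def ip {α : Type*} [Fintype α] (f g : α → ℂ) : ℂ :=
  ∑ x, f x * (starRingEnd ℂ) (g x)

/-- Hamming weight: the number of nonzero coordinates. -/
def wt {N : ℕ} (γ : Vtx N) : ℕ := (Finset.univ.filter fun i => γ i ≠ 0).card

/-- Hadamard vector h_γ(v) = 2^{−N/2}·(−1)^{Σ v_i γ_i}. -/
def had (N : ℕ) (γ : Vtx N) : Vtx N → ℂ :=
  fun v => (Real.sqrt (2 ^ N) : ℂ)⁻¹ * (-1) ^ (∑ i, (v i).val * (γ i).val)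

/-- The Neumann vector h_{n,K} = binom(N,K)^{−1/2} Σ_{|γ|=K} h_γ. -/
def neu (N K : ℕ) : Vtx N → ℂ :=
  fun v => (Real.sqrt (N.choose K) : ℂ)⁻¹ *
    ∑ γ ∈ Finset.univ.filter (fun γ : Vtx N => wt γ = K), had N γ v

/-- The Neumann subspace span{h_{n,0},…,h_{n,N}}. -/
def Nsub (N : ℕ) : Submodule ℂ (Vtx N → ℂ) :=
  Submodule.span ℂ (Set.range fun K : Fin (N + 1) => neu N K)

lemma vOne_ne_vZero {N : ℕ} (hN : 1 ≤ N) : vOne N ≠ vZero N := by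
  intro h
  have := congrFun h ⟨0, hN⟩
  simp [vOne, vZero] at this

lemma subLap_eq {N m : ℕ} [NeZero m] (hN : 1 ≤ N) (hm : 3 ≤ m) (f : Vtx N × ZMod m → ℂ)
    (u : Vtx N) (k : ZMod m) :
    subLap N m f (u, k) = cubeLap N (fun w => f (w, k)) u
      + (if u = vOne N then f (u, k) - f (vZero N, k + 1) else 0)
      + (if u = vZero N then f (u, k) - f (vOne N, k - 1) else 0) := by
  haveI : Fact (1 < m) := ⟨by omega⟩
  have hne := vOne_ne_vZero hN
  have h1 : (1 : ZMod m) ≠ 0 := one_ne_zero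
  have key : ∀ y : Vtx N × ZMod m, (if subAdj N m (u, k) y then f (u, k) - f y else 0)
      = (if k = y.2 then (if cubeAdj u y.1 then f (u, k) - f y else 0) else 0)
        + (if y = (vZero N, k + 1) then (if u = vOne N then f (u, k) - f y else 0) else 0)
        + (if y = (vOne N, k - 1) then (if u = vZero N then f (u, k) - f y else 0) else 0) := by
    rintro ⟨w, l⟩
    simp only [subAdj, Prod.mk.injEq]
    by_cases hk : k = l
    · subst hk
      have a1 : ¬ (k = k + 1) := by simpa using h1
      have a2 : ¬ (k = k - 1) := by
        intro h; apply h1; have := sub_eq_self.mp h.symm; exact this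
      simp [a1, a2]
    · have e : (k = l + 1) ↔ (l = k - 1) := by
        constructor
        · intro h; rw [h]; ring
        · intro h; rw [h]; ring
      simp only [hk, false_and, false_or, if_false, zero_add, e]
      by_cases hu : u = vOne N
      · subst hu
        simp [hne]
      · by_cases hu' : u = vZero N
        · subst hu'
          simp [hne.symm]
        · simp [hu, hu']
  unfold subLap
  rw [Finset.sum_filter, Finset.sum_congr rfl (fun y _ => key y), Finset.sum_add_distrib,
    Finset.sum_add_distrib, Finset.sum_ite_eq', Finset.sum_ite_eq', Fintype.sum_prod_type]
  simp only [Finset.sum_ite_eq, Finset.mem_univ, if_true]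
  unfold cubeLap
  rw [Finset.sum_filter]

lemma exp_eq_pow (m : ℕ) (a b : ℕ) :
    Complex.exp (2 * (π : ℂ) * Complex.I * a * b / m)
      = (Complex.exp (2 * (π : ℂ) * Complex.I / m) ^ a) ^ b := by
  rw [← pow_mul, ← Complex.exp_nat_mul]
  congr 1
  push_cast
  ring

lemma exp_eq_pow1 (m : ℕ) (a : ℕ) :
    Complex.exp (2 * (π : ℂ) * Complex.I * a / m)
      = Complex.exp (2 * (π : ℂ) * Complex.I / m) ^ a := by
  rw [← Complex.exp_nat_mul]
  congr 1
  ring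

lemma pow_val_succ {m : ℕ} [NeZero m] (hm : 3 ≤ m) (ω : ℂ) (hω : ω ^ m = 1) (k : ZMod m) :
    ω ^ (k + 1).val = ω * ω ^ k.val := by
  haveI : Fact (1 < m) := ⟨by omega⟩
  rw [ZMod.val_add, ZMod.val_one, ← pow_eq_pow_mod _ hω, pow_succ, mul_comm]

lemma pow_val_pred {m : ℕ} [NeZero m] (hm : 3 ≤ m) (ω : ℂ) (hω : ω ^ m = 1) (h0 : ω ≠ 0)
    (k : ZMod m) : ω ^ (k - 1).val = ω ^ k.val / ω := by
  have := pow_val_succ hm ω hω (k - 1)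
  rw [sub_add_cancel] at this
  rw [this]; field_simp

lemma orth_sum {m : ℕ} [NeZero m] (z : ℂ) (hz : IsPrimitiveRoot z m) (k l : ZMod m) :
    ∑ ν : Fin m, ((z ^ ν.val) ^ k.val)⁻¹ * (z ^ ν.val) ^ l.val = if l = k then (m : ℂ) else 0 := by
  have hz0 : z ≠ 0 := hz.ne_zero (NeZero.ne m)
  have e : ∀ ν : Fin m, ((z ^ ν.val) ^ k.val)⁻¹ * (z ^ ν.val) ^ l.val
      = (z ^ l.val / z ^ k.val) ^ ν.val := by
    intro ν
    rw [div_pow, ← pow_mul, ← pow_mul, ← pow_mul, ← pow_mul, mul_comm k.val, mul_comm l.val,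
      div_eq_mul_inv, mul_comm]
  rw [Finset.sum_congr rfl (fun ν _ => e ν)]
  split_ifs with h
  · subst h
    simp [hz0]
  · have hne : z ^ l.val / z ^ k.val ≠ 1 := by
      intro h1
      rw [div_eq_one_iff_eq (pow_ne_zero _ hz0)] at h1
      exact h (ZMod.val_injective m (hz.pow_inj (ZMod.val_lt l) (ZMod.val_lt k) h1))
    rw [Fin.sum_univ_eq_sum_range (fun i => (z ^ l.val / z ^ k.val) ^ i) m]
    have hg := mul_geom_sum (z ^ l.val / z ^ k.val) m
    have h1 : (z ^ l.val / z ^ k.val) ^ m = 1 := by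
      rw [div_pow, ← pow_mul, ← pow_mul, mul_comm, mul_comm k.val, pow_mul, pow_mul, hz.pow_eq_one]
      simp
    rw [h1, sub_self] at hg
    exact (mul_eq_zero.mp hg).resolve_left (sub_ne_zero.mpr hne)

lemma ip_self_ne {α : Type*} [Fintype α] (g : α → ℂ) (h : g ≠ 0) : ip g g ≠ 0 := by
  intro h0
  apply h
  have : ((∑ x, Complex.normSq (g x) : ℝ) : ℂ) = 0 := by
    rw [← h0]; push_cast; unfold ip
    exact Finset.sum_congr rfl (fun x _ => (Complex.mul_conj _).symm)
  have h2 : (∑ x, Complex.normSq (g x) : ℝ) = 0 := by exact_mod_cast this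
  rw [Finset.sum_eq_zero_iff_of_nonneg (fun x _ => Complex.normSq_nonneg _)] at h2
  funext x
  exact Complex.normSq_eq_zero.mp (h2 x (Finset.mem_univ x))

lemma orth_indep {α ι : Type*} [Fintype α] [Fintype ι] (g : ι → α → ℂ) (hne : ∀ i, g i ≠ 0)
    (ho : ∀ i j, i ≠ j → ip (g i) (g j) = 0) : LinearIndependent ℂ g := by
  rw [Fintype.linearIndependent_iff]
  intro c hc j
  have h1 : ip (∑ i, c i • g i) (g j) = c j * ip (g j) (g j) := by
    have : ip (∑ i, c i • g i) (g j) = ∑ i, c i * ip (g i) (g j) := by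
      unfold ip
      simp only [Finset.sum_apply, Pi.smul_apply, smul_eq_mul, Finset.sum_mul, Finset.mul_sum]
      rw [Finset.sum_comm]
      simp only [mul_assoc]
    rw [this, Finset.sum_eq_single j]
    · intro i _ hi
      rw [ho i j hi, mul_zero]
    · simp
  rw [hc] at h1
  have h2 : ip (0 : α → ℂ) (g j) = 0 := by simp [ip]
  rw [h2] at h1
  exact (mul_eq_zero.mp h1.symm).resolve_right (ip_self_ne _ (hne j))

lemma span_eq_Nsub {N : ℕ} (g : Fin (N + 1) → Vtx N → ℂ) (hne : ∀ i, g i ≠ 0)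
    (ho : ∀ i j, i ≠ j → ip (g i) (g j) = 0) (hmem : ∀ i, g i ∈ Nsub N) :
    Submodule.span ℂ (Set.range g) = Nsub N := by
  apply Submodule.eq_of_le_of_finrank_le
  · rw [Submodule.span_le]; rintro _ ⟨i, rfl⟩; exact hmem i
  · rw [finrank_span_eq_card (orth_indep g hne ho)]
    exact finrank_range_le_card _

def iotaL {N m : ℕ} (k : ZMod m) : (Vtx N → ℂ) →ₗ[ℂ] (Vtx N × ZMod m → ℂ) where
  toFun := iota k
  map_add' a b := by funext x; simp only [iota, Pi.add_apply]; split_ifs <;> simp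
  map_smul' a b := by funext x; simp only [iota, Pi.smul_apply, RingHom.id_apply]; split_ifs <;> simp

def phiL {N m : ℕ} (E : ZMod m → ℂ) : (Vtx N → ℂ) →ₗ[ℂ] (Vtx N × ZMod m → ℂ) where
  toFun g := fun x => E x.2 * g x.1
  map_add' a b := by funext x; simp [mul_add]
  map_smul' a b := by funext x; simp; ring

/-- the m(2^N−N−1) Dirichlet-type functions ι_k d_j together with
the m(N+1) Neumann-type functions Φ_{ν,i}(u,k) = e^{2πiνk/m} f_{ν,i}(u) are all
eigenvectors of L(B_N ⊢ C_m), and together form a basis of ℓ²(V × ZMod m). -/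
theorem stmt9 (N m : ℕ) [NeZero m] (hN : 1 ≤ N) (hm : 3 ≤ m)
    (d : Fin (2 ^ N - N - 1) → (Vtx N → ℂ))
    (hd_eig : ∀ j, ∃ μ : ℂ, cubeLap N (d j) = fun v => μ * d j v)
    (hd0 : ∀ j, d j (vZero N) = 0) (hd1 : ∀ j, d j (vOne N) = 0)
    (hd_indep : LinearIndependent ℂ d)
    (hd_orth : ∀ j, ∀ K : Fin (N + 1), ip (d j) (neu N K) = 0)
    (hd_span : Submodule.span ℂ (Set.range d) ⊔ Nsub N = ⊤)
    (f : Fin m → Fin (N + 1) → (Vtx N → ℂ))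
    (hf_ne : ∀ ν i, f ν i ≠ 0)
    (hf_orth : ∀ ν i i', i ≠ i' → ip (f ν i) (f ν i') = 0)
    (hf_eig : ∀ ν i, ∃ μ : ℂ,
      augLap N (Complex.exp (2 * (π : ℂ) * Complex.I * ν.val / m)) (f ν i) =
        fun v => μ * f ν i v)
    (hf_mem : ∀ ν i, f ν i ∈ Nsub N) :
    (∀ (k : ZMod m) (j), ∃ μ : ℂ,
      subLap N m (iota k (d j)) = fun x => μ * iota k (d j) x) ∧
    (∀ (ν : Fin m) (i : Fin (N + 1)), ∃ μ : ℂ,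
      subLap N m
          (fun x => Complex.exp (2 * (π : ℂ) * Complex.I * ν.val * x.2.val / m) * f ν i x.1) =
        fun x => μ * (Complex.exp (2 * (π : ℂ) * Complex.I * ν.val * x.2.val / m) * f ν i x.1)) ∧
    LinearIndependent ℂ
      (Sum.elim
        (fun p : ZMod m × Fin (2 ^ N - N - 1) => iota p.1 (d p.2))
        (fun p : Fin m × Fin (N + 1) => fun x : Vtx N × ZMod m =>
          Complex.exp (2 * (π : ℂ) * Complex.I * p.1.val * x.2.val / m) * f p.1 p.2 x.1)) ∧
    Submodule.span ℂ
      (Set.range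
        (Sum.elim
          (fun p : ZMod m × Fin (2 ^ N - N - 1) => iota p.1 (d p.2))
          (fun p : Fin m × Fin (N + 1) => fun x : Vtx N × ZMod m =>
            Complex.exp (2 * (π : ℂ) * Complex.I * p.1.val * x.2.val / m) * f p.1 p.2 x.1))) =
      ⊤ := by
  set z : ℂ := Complex.exp (2 * (π : ℂ) * Complex.I / m) with hzdef
  have hz : IsPrimitiveRoot z m := Complex.isPrimitiveRoot_exp m (NeZero.ne m)
  have hz0 : z ≠ 0 := hz.ne_zero (NeZero.ne m)
  simp only [exp_eq_pow, ← hzdef]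
  simp only [exp_eq_pow1, ← hzdef] at hf_eig
  refine ⟨?_, ?_, ?_⟩
  · intro k j
    obtain ⟨μ, hμ⟩ := hd_eig j
    refine ⟨μ, ?_⟩
    funext ⟨u, l⟩
    rw [subLap_eq hN hm]
    have c1 : (if u = vOne N then iota k (d j) (u, l) - iota k (d j) (vZero N, l + 1) else 0) = 0 := by
      split_ifs with h
      · subst h; simp [iota, hd0, hd1]
      · rfl
    have c2 : (if u = vZero N then iota k (d j) (u, l) - iota k (d j) (vOne N, l - 1) else 0) = 0 := by
      split_ifs with h
      · subst h; simp [iota, hd0, hd1]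
      · rfl
    rw [c1, c2, add_zero, add_zero]
    by_cases h : l = k
    · simp only [iota, h, if_true]
      exact congrFun hμ u
    · simp [iota, h, cubeLap]
  · intro ν i
    obtain ⟨μ, hμ⟩ := hf_eig ν i
    refine ⟨μ, ?_⟩
    have hω : (z ^ ν.val) ^ m = 1 := by rw [← pow_mul, mul_comm, pow_mul, hz.pow_eq_one, one_pow]
    have hω0 : z ^ ν.val ≠ 0 := pow_ne_zero _ hz0
    funext ⟨u, k⟩
    rw [subLap_eq hN hm]
    simp only [pow_val_succ hm _ hω, pow_val_pred hm _ hω hω0]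
    generalize z ^ ν.val = ω at *
    have hu := congrFun hμ u
    have hc : cubeLap N (fun w => ω ^ k.val * f ν i w) u = ω ^ k.val * cubeLap N (f ν i) u := by
      simp only [cubeLap, Finset.mul_sum, mul_sub]
    rw [hc]
    have hne := vOne_ne_vZero hN
    simp only [augLap, corner] at hu
    rw [mul_left_comm, ← hu]
    by_cases h0 : u = vZero N
    · subst h0
      simp only [if_true, if_neg hne.symm]
      field_simp
      ring
    · by_cases h1 : u = vOne N
      · subst h1
        simp only [if_true, if_neg hne]
        ring
      · simp [h0, h1]
  · set F := (Sum.elim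
        (fun p : ZMod m × Fin (2 ^ N - N - 1) => iota p.1 (d p.2))
        (fun p : Fin m × Fin (N + 1) => fun x : Vtx N × ZMod m =>
          (z ^ p.1.val) ^ x.2.val * f p.1 p.2 x.1)) with hF
    have hphi : ∀ (ν : Fin m) (g : Vtx N → ℂ), g ∈ Nsub N →
        phiL (fun k : ZMod m => (z ^ ν.val) ^ k.val) g ∈ Submodule.span ℂ (Set.range F) := by
      intro ν g hg
      rw [← span_eq_Nsub (f ν) (hf_ne ν) (hf_orth ν) (hf_mem ν)] at hg
      have : Submodule.span ℂ (Set.range (f ν)) ≤ (Submodule.span ℂ (Set.range F)).comap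
          (phiL (fun k : ZMod m => (z ^ ν.val) ^ k.val)) := by
        rw [Submodule.span_le]
        rintro _ ⟨i, rfl⟩
        exact Submodule.subset_span ⟨Sum.inr (ν, i), rfl⟩
      exact this hg
    have hiota : ∀ (k : ZMod m) (g : Vtx N → ℂ), iota k g ∈ Submodule.span ℂ (Set.range F) := by
      intro k
      have h : Submodule.span ℂ (Set.range d) ⊔ Nsub N ≤
          (Submodule.span ℂ (Set.range F)).comap (iotaL k) := by
        refine sup_le ?_ ?_
        · rw [Submodule.span_le]
          rintro _ ⟨j, rfl⟩
          exact Submodule.subset_span ⟨Sum.inl (k, j), rfl⟩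
        · intro g hg
          have e : iotaL k g = (m : ℂ)⁻¹ • ∑ ν : Fin m, ((z ^ ν.val) ^ k.val)⁻¹ •
              phiL (fun k : ZMod m => (z ^ ν.val) ^ k.val) g := by
            funext ⟨u, l⟩
            have hs := orth_sum z hz k l
            have hm0 : (m : ℂ) ≠ 0 := Nat.cast_ne_zero.mpr (NeZero.ne m)
            simp only [Pi.smul_apply, Finset.sum_apply, smul_eq_mul, phiL, LinearMap.coe_mk,
              AddHom.coe_mk, iotaL, iota]
            simp only [← mul_assoc]
            rw [← Finset.sum_mul, hs]
            split_ifs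
            · field_simp
            · simp
          rw [Submodule.mem_comap, e]
          exact Submodule.smul_mem _ _ (Submodule.sum_mem _ (fun ν _ =>
            Submodule.smul_mem _ _ (hphi ν g hg)))
      rw [hd_span] at h
      intro g
      exact h (Submodule.mem_top (x := g))
    have hspan : Submodule.span ℂ (Set.range F) = ⊤ := by
      rw [eq_top_iff]
      intro g _
      have : g = ∑ k : ZMod m, iota k (fun u => g (u, k)) := by
        funext ⟨u, l⟩
        simp [Finset.sum_apply, iota]
      rw [this]
      exact Submodule.sum_mem _ (fun k _ => hiota k _)
    refine ⟨?_, hspan⟩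
    apply linearIndependent_of_top_le_span_of_card_eq_finrank hspan.ge
    have hlt : N < 2 ^ N := Nat.lt_two_pow_self
    have hs : 2 ^ N - N - 1 + (N + 1) = 2 ^ N := by omega
    simp only [Fintype.card_sum, Fintype.card_prod, ZMod.card, Fintype.card_fin,
      Module.finrank_fintype_fun_eq_card, Fintype.card_pi, Finset.prod_const, Finset.card_univ]
    rw [← Nat.mul_add, hs, mul_comm]
end
end

section
/- Let 3 ≤ K < N and m ≥ 3. Then PW_{2K}(B_N □ C_m) is the orthogonal direct sum of the three subspaces of ℓ²(V × ZMod m): (i) the span of all f ⊗ g with f ∈ PW_{2K−4}(B_N) and g ∈ ℓ²(ZMod m); (ii) the span of all f ⊗ g with f ∈ Λ_{2K−2}(B_N) and g ∈ PW_2(C_m); and (iii) the span of all f ⊗ g with f ∈ Λ_{2K}(B_N) and g constant. -/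
open Complex Finset
open scoped Real Classical

noncomputable section

/-- Unnormalized Laplacian of the cycle graph C_m:
(L f)(ℓ) = 2 f(ℓ) − f(ℓ+1) − f(ℓ−1). -/
def cycLap (m : ℕ) (f : ZMod m → ℂ) : ZMod m → ℂ :=
  fun ℓ => 2 * f ℓ - f (ℓ + 1) - f (ℓ - 1)

/-- Unnormalized Laplacian of the Cartesian product B_N □ C_m: each vertex
(u,ℓ) has its cube neighbors (w,ℓ) and its cycle neighbors (u,ℓ±1). -/
def prodLap (N m : ℕ) (F : Vtx N × ZMod m → ℂ) : Vtx N × ZMod m → ℂ :=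
  fun x => cubeLap N (fun u => F (u, x.2)) x.1 +
    (2 * F x - F (x.1, x.2 + 1) - F (x.1, x.2 - 1))

/-- Paley–Wiener space of B_N: span of Laplacian eigenvectors with
eigenvalue at most Ω. -/
def PWcube (N : ℕ) (Ω : ℝ) : Submodule ℂ (Vtx N → ℂ) :=
  Submodule.span ℂ {f | ∃ μ : ℝ, μ ≤ Ω ∧ cubeLap N f = fun v => (μ : ℂ) * f v}

/-- Paley–Wiener space of C_m: span of Laplacian eigenvectors with
eigenvalue at most Ω. -/
def PWcyc (m : ℕ) (Ω : ℝ) : Submodule ℂ (ZMod m → ℂ) :=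
  Submodule.span ℂ {g | ∃ μ : ℝ, μ ≤ Ω ∧ cycLap m g = fun ℓ => (μ : ℂ) * g ℓ}

/-- Paley–Wiener space of B_N □ C_m: span of Laplacian eigenvectors with
eigenvalue at most Ω. -/
def PWprod (N m : ℕ) (Ω : ℝ) : Submodule ℂ (Vtx N × ZMod m → ℂ) :=
  Submodule.span ℂ {F | ∃ μ : ℝ, μ ≤ Ω ∧ prodLap N m F = fun x => (μ : ℂ) * F x}

/-- Truncation Q to the zero B_N-slice. -/
def Qslice (N m : ℕ) (F : Vtx N × ZMod m → ℂ) : Vtx N × ZMod m → ℂ :=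
  fun x => if x.2 = 0 then F x else 0

/-- Component (i): span of all f ⊗ g with f ∈ PW_{2K−4}(B_N), g ∈ ℓ²(C_m). -/
def S1 (N K m : ℕ) : Submodule ℂ (Vtx N × ZMod m → ℂ) :=
  Submodule.span ℂ {F | ∃ (f : Vtx N → ℂ) (g : ZMod m → ℂ),
    f ∈ PWcube N (2 * (K : ℝ) - 4) ∧ F = fun x => f x.1 * g x.2}

/-- Component (ii): span of all f ⊗ g with f ∈ Λ_{2K−2}(B_N), g ∈ PW_2(C_m). -/
def S2 (N K m : ℕ) : Submodule ℂ (Vtx N × ZMod m → ℂ) :=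
  Submodule.span ℂ {F | ∃ (f : Vtx N → ℂ) (g : ZMod m → ℂ),
    (cubeLap N f = fun v => ((2 * (K : ℝ) - 2 : ℝ) : ℂ) * f v) ∧
    g ∈ PWcyc m 2 ∧ F = fun x => f x.1 * g x.2}

/-- Component (iii): span of all f ⊗ g with f ∈ Λ_{2K}(B_N), g constant. -/
def S3 (N K m : ℕ) : Submodule ℂ (Vtx N × ZMod m → ℂ) :=
  Submodule.span ℂ {F | ∃ (f : Vtx N → ℂ) (c : ℂ),
    (cubeLap N f = fun v => ((2 * (K : ℝ) : ℝ) : ℂ) * f v) ∧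
    F = fun x => f x.1 * c}

theorem aux_adj {N : ℕ} (v w : Vtx N) :
    cubeAdj v w ↔ ∃ i : Fin N, v + Pi.single i 1 = w := by
  unfold cubeAdj
  rw [Finset.card_eq_one]
  have key : ∀ a b : ZMod 2, a ≠ b ↔ a + 1 = b := by decide
  constructor
  · rintro ⟨i, hi⟩
    refine ⟨i, ?_⟩
    funext j
    have hj := Finset.ext_iff.mp hi j
    simp only [Finset.mem_filter, Finset.mem_univ, true_and, Finset.mem_singleton] at hj
    by_cases h : j = i
    · subst h
      simpa using (key _ _).mp (hj.mpr rfl)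
    · have : v j = w j := by
        by_contra h'
        exact h (hj.mp h')
      simp [Pi.single_apply, h, this]
  · rintro ⟨i, rfl⟩
    refine ⟨i, ?_⟩
    ext j
    by_cases h : j = i
    · subst h; simp
    · simp [Pi.single_apply, h]

theorem aux_cube {N : ℕ} (f : Vtx N → ℂ) (v : Vtx N) :
    cubeLap N f v = ∑ i : Fin N, (f v - f (v + Pi.single i 1)) := by
  unfold cubeLap
  have h : (Finset.univ.filter fun w => cubeAdj v w)
      = Finset.univ.image (fun i : Fin N => v + Pi.single i (1 : ZMod 2)) := by
    ext w
    simp [aux_adj]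
  rw [h, Finset.sum_image]
  intro i _ j _ hij
  have h2 : (Pi.single i 1 : Vtx N) = Pi.single j 1 := add_left_cancel hij
  by_contra hne
  have := congrFun h2 i
  simp [Pi.single_apply, hne] at this

theorem aux_ee {N : ℕ} (i : Fin N) :
    (Pi.single i 1 : Vtx N) + Pi.single i 1 = 0 := by
  rw [← Pi.single_add]
  have : (1 : ZMod 2) + 1 = 0 := by decide
  simp [this]

theorem aux_symm {N : ℕ} (f g : Vtx N → ℂ) :
    ip (cubeLap N f) g = ip f (cubeLap N g) := by
  unfold ip
  simp only [aux_cube, map_sum, map_sub, Finset.sum_mul, Finset.mul_sum]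
  rw [Finset.sum_comm]
  conv_rhs => rw [Finset.sum_comm]
  refine Finset.sum_congr rfl fun i _ => ?_
  simp only [sub_mul, mul_sub, Finset.sum_sub_distrib]
  congr 1
  refine Fintype.sum_equiv (Equiv.addRight (Pi.single i 1 : Vtx N)) _ _ fun v => ?_
  simp [add_assoc, aux_ee]

theorem aux_orth {N : ℕ} {f g : Vtx N → ℂ} {a b : ℝ} (hab : a ≠ b)
    (hf : cubeLap N f = fun v => (a : ℂ) * f v)
    (hg : cubeLap N g = fun v => (b : ℂ) * g v) : ip f g = 0 := by
  have h := aux_symm f g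
  rw [hf, hg] at h
  have h1 : ip (fun v => (a : ℂ) * f v) g = a * ip f g := by
    simp [ip, Finset.mul_sum, mul_assoc]
  have h2 : ip f (fun v => (b : ℂ) * g v) = b * ip f g := by
    simp only [ip, Finset.mul_sum, map_mul, Complex.conj_ofReal]
    exact Finset.sum_congr rfl fun _ _ => by ring
  rw [h1, h2] at h
  have h3 : ((a : ℂ) - b) * ip f g = 0 := by rw [sub_mul, h, sub_self]
  rcases mul_eq_zero.mp h3 with h4 | h4
  · exact absurd (by exact_mod_cast sub_eq_zero.mp h4) hab
  · exact h4

theorem aux_ip_add_left {α : Type*} [Fintype α] (f f' g : α → ℂ) :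
    ip (f + f') g = ip f g + ip f' g := by
  simp [ip, add_mul, Finset.sum_add_distrib]

theorem aux_ip_smul_left {α : Type*} [Fintype α] (c : ℂ) (f g : α → ℂ) :
    ip (c • f) g = c * ip f g := by
  simp [ip, Finset.mul_sum, mul_assoc]

theorem aux_ip_conj {α : Type*} [Fintype α] (f g : α → ℂ) :
    ip f g = (starRingEnd ℂ) (ip g f) := by
  simp [ip, mul_comm]

theorem aux_span_left {α : Type*} [Fintype α] {A : Set (α → ℂ)} {g : α → ℂ}
    (h : ∀ f ∈ A, ip f g = 0) : ∀ f ∈ Submodule.span ℂ A, ip f g = 0 := by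
  intro f hf
  induction hf using Submodule.span_induction with
  | mem x hx => exact h x hx
  | zero => simp [ip]
  | add x y _ _ hx hy => rw [aux_ip_add_left, hx, hy, add_zero]
  | smul c x _ hx => rw [aux_ip_smul_left, hx, mul_zero]

theorem aux_span {α : Type*} [Fintype α] {A B : Set (α → ℂ)}
    (h : ∀ f ∈ A, ∀ g ∈ B, ip f g = 0) :
    ∀ f ∈ Submodule.span ℂ A, ∀ g ∈ Submodule.span ℂ B, ip f g = 0 := by
  intro f hf g hg
  rw [aux_ip_conj, aux_span_left (A := B) (g := f) _ g hg, map_zero]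
  intro b hb
  rw [aux_ip_conj, aux_span_left (A := A) (g := b) (fun a ha => h a ha b hb) f hf, map_zero]

theorem aux_ip_tensor {α β : Type*} [Fintype α] [Fintype β] (f f' : α → ℂ) (g g' : β → ℂ)
    (h : ip f f' = 0) :
    ip (fun x : α × β => f x.1 * g x.2) (fun x : α × β => f' x.1 * g' x.2) = 0 := by
  have : ip (fun x : α × β => f x.1 * g x.2) (fun x : α × β => f' x.1 * g' x.2)
      = ip f f' * ip g g' := by
    simp only [ip, Fintype.sum_prod_type, Finset.sum_mul_sum, map_mul]
    exact Finset.sum_congr rfl fun _ _ => Finset.sum_congr rfl fun _ _ => by ring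
  rw [this, h, zero_mul]

def prodLin (N m : ℕ) : Module.End ℂ (Vtx N × ZMod m → ℂ) where
  toFun := prodLap N m
  map_add' F G := by
    funext x
    simp only [prodLap, aux_cube, Pi.add_apply, Finset.sum_sub_distrib, Finset.sum_add_distrib]
    ring
  map_smul' c F := by
    funext x
    simp only [prodLap, aux_cube, Pi.smul_apply, smul_eq_mul, RingHom.id_apply,
      Finset.sum_sub_distrib, ← Finset.mul_sum]
    ring

theorem aux_tensor_eig {N m : ℕ} {f : Vtx N → ℂ} {g : ZMod m → ℂ} {a b : ℝ}
    (hf : cubeLap N f = fun v => (a : ℂ) * f v)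
    (hg : cycLap m g = fun v => (b : ℂ) * g v) :
    prodLap N m (fun x => f x.1 * g x.2) = fun x => ((a + b : ℝ) : ℂ) * (f x.1 * g x.2) := by
  funext x
  have h1 := congrFun hf x.1
  have h2 := congrFun hg x.2
  simp only [aux_cube] at h1
  simp only [cycLap] at h2
  simp only [prodLap, aux_cube, ← sub_mul, ← Finset.sum_mul, h1]
  push_cast
  linear_combination f x.1 * h2

/-- spectral data of a character of the cycle -/
theorem aux_cyc_char {m : ℕ} [NeZero m] (ψ : AddChar (ZMod m) ℂ) :
    ∃ b : ℝ, 0 ≤ b ∧ b ≤ 4 ∧ (cycLap m ψ = fun v => (b : ℂ) * ψ v) ∧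
      (b = 0 → ∀ l, ψ l = 1) := by
  have hn : ‖ψ 1‖ = 1 := ψ.norm_apply 1
  have hre := Complex.abs_re_le_norm (ψ 1)
  rw [hn, abs_le] at hre
  refine ⟨2 - 2 * (ψ 1).re, by linarith, by linarith, ?_, ?_⟩
  · funext l
    have h1 : ψ (-1) = (starRingEnd ℂ) (ψ 1) := ψ.map_neg_eq_conj 1
    have h2 := Complex.add_conj (ψ 1)
    simp only [cycLap, sub_eq_add_neg, AddChar.map_add_eq_mul, h1]
    push_cast at h2 ⊢
    linear_combination (-ψ l) * h2
  · intro h0 l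
    have hr : (ψ 1).re = 1 := by linarith
    have hi : (ψ 1).im = 0 := by
      have h3 := Complex.sq_norm (ψ 1)
      rw [hn, Complex.normSq_apply, hr] at h3
      nlinarith
    have h1 : ψ 1 = 1 := Complex.ext (by simpa using hr) (by simpa using hi)
    have : l = l.val • (1 : ZMod m) := by simp
    rw [this, AddChar.map_nsmul_eq_pow, h1, one_pow]

theorem aux_cube_char {N : ℕ} (ψ : AddChar (Vtx N) ℂ) :
    ∃ j : ℕ, cubeLap N ψ = fun v => ((2 * (j : ℝ) : ℝ) : ℂ) * ψ v := by
  refine ⟨(Finset.univ.filter fun i : Fin N => ψ (Pi.single i 1) ≠ 1).card, ?_⟩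
  funext v
  have key : ∀ i : Fin N, ψ v - ψ (v + Pi.single i 1) =
      (if ψ (Pi.single i 1) ≠ 1 then (1 : ℂ) else 0) * (2 * ψ v) := by
    intro i
    rw [AddChar.map_add_eq_mul]
    have h : ψ (Pi.single i 1) * ψ (Pi.single i 1) = 1 := by
      rw [← AddChar.map_add_eq_mul, aux_ee, AddChar.map_zero_eq_one]
    rcases mul_self_eq_one_iff.mp h with h | h
    · simp [h]
    · have h1 : (-1 : ℂ) ≠ 1 := by norm_num
      rw [h, if_pos h1]; ring
  rw [aux_cube, Finset.sum_congr rfl fun i _ => key i, ← Finset.sum_mul, Finset.sum_boole]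
  push_cast
  ring

theorem aux_eig {M : Type*} [AddCommGroup M] [Module ℂ M] (T : Module.End ℂ M) {ι : Type*}
    (b : ι → M) (ν : ι → ℂ) (hb : ∀ i, T (b i) = ν i • b i)
    (hs : Submodule.span ℂ (Set.range b) = ⊤) (μ : ℂ) (F : M) (hF : T F = μ • F) :
    F ∈ Submodule.span ℂ {x | ∃ i, ν i = μ ∧ x = b i} := by
  have hsub : Set.range b ⊆ {x | ∃ i, ν i = μ ∧ x = b i} ∪ {x | ∃ i, ν i ≠ μ ∧ x = b i} := by
    rintro _ ⟨i, rfl⟩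
    by_cases h : ν i = μ
    · exact Or.inl ⟨i, h, rfl⟩
    · exact Or.inr ⟨i, h, rfl⟩
  have hF' : F ∈ Submodule.span ℂ
      ({x | ∃ i, ν i = μ ∧ x = b i} ∪ {x | ∃ i, ν i ≠ μ ∧ x = b i}) :=
    Submodule.span_mono hsub (hs ▸ Submodule.mem_top)
  rw [Submodule.span_union, Submodule.mem_sup] at hF'
  obtain ⟨F1, h1, F2, h2, rfl⟩ := hF'
  have e1 : F1 ∈ T.eigenspace μ := by
    refine Submodule.span_le.mpr ?_ h1
    rintro _ ⟨i, hi, rfl⟩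
    exact Module.End.mem_eigenspace_iff.mpr (by rw [hb, hi])
  have e2 : F2 ∈ T.eigenspace μ := by
    have := Submodule.sub_mem _ (Module.End.mem_eigenspace_iff.mpr hF) e1
    simpa using this
  have e3 : F2 ∈ ⨆ c, ⨆ (_ : c ≠ μ), T.eigenspace c := by
    refine Submodule.span_le.mpr ?_ h2
    rintro _ ⟨i, hi, rfl⟩
    refine Submodule.mem_iSup_of_mem (ν i) (Submodule.mem_iSup_of_mem hi ?_)
    exact Module.End.mem_eigenspace_iff.mpr (hb i)
  have : F2 = 0 := Submodule.disjoint_def.mp (T.eigenspaces_iSupIndep μ) F2 e2 e3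
  rw [this, add_zero]
  exact h1

theorem aux_span_char (α : Type*) [AddCommGroup α] [Finite α] :
    Submodule.span ℂ (Set.range fun ψ : AddChar α ℂ => (ψ : α → ℂ)) = ⊤ := by
  have := (AddChar.complexBasis α).span_eq
  rwa [AddChar.coe_complexBasis] at this

theorem aux_S1_le (N K m : ℕ) [NeZero m] : S1 N K m ≤ PWprod N m (2 * (K : ℝ)) := by
  refine Submodule.span_le.mpr ?_
  rintro _ ⟨f, g, hf, rfl⟩
  show _ ∈ PWprod N m _
  have hg : g ∈ Submodule.span ℂ (Set.range fun ψ : AddChar (ZMod m) ℂ => (ψ : ZMod m → ℂ)) :=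
    (aux_span_char (ZMod m)) ▸ Submodule.mem_top
  unfold PWcube at hf
  induction hf using Submodule.span_induction with
  | zero => simp only [Pi.zero_apply, zero_mul, mul_zero]; exact (PWprod N m _).zero_mem
  | add x y _ _ hx hy =>
    have := Submodule.add_mem _ hx hy
    convert this using 1
    funext z; simp [add_mul]
  | smul c x _ hx =>
    have := Submodule.smul_mem _ c hx
    convert this using 1
    funext z; simp [mul_assoc]
  | mem f hf =>
    obtain ⟨a, ha, hf⟩ := hf
    induction hg using Submodule.span_induction with
    | zero => simp only [Pi.zero_apply, zero_mul, mul_zero]; exact (PWprod N m _).zero_mem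
    | add x y _ _ hx hy =>
      have := Submodule.add_mem _ hx hy
      convert this using 1
      funext z; simp [mul_add]
    | smul c x _ hx =>
      have := Submodule.smul_mem _ c hx
      convert this using 1
      funext z; simp [mul_left_comm]
    | mem g hg =>
      obtain ⟨ψ, rfl⟩ := hg
      obtain ⟨b, -, hb, hψ, -⟩ := aux_cyc_char ψ
      exact Submodule.subset_span ⟨a + b, by linarith, aux_tensor_eig hf hψ⟩

theorem aux_S2_le (N K m : ℕ) : S2 N K m ≤ PWprod N m (2 * (K : ℝ)) := by
  refine Submodule.span_le.mpr ?_
  rintro _ ⟨f, g, hf, hg, rfl⟩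
  show _ ∈ PWprod N m _
  unfold PWcyc at hg
  induction hg using Submodule.span_induction with
  | zero => simp only [Pi.zero_apply, zero_mul, mul_zero]; exact (PWprod N m _).zero_mem
  | add x y _ _ hx hy =>
    have := Submodule.add_mem _ hx hy
    convert this using 1
    funext z; simp [mul_add]
  | smul c x _ hx =>
    have := Submodule.smul_mem _ c hx
    convert this using 1
    funext z; simp [mul_left_comm]
  | mem g hg =>
    obtain ⟨b, hb, hψ⟩ := hg
    exact Submodule.subset_span ⟨2 * (K : ℝ) - 2 + b, by linarith, aux_tensor_eig hf hψ⟩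

theorem aux_S3_le (N K m : ℕ) : S3 N K m ≤ PWprod N m (2 * (K : ℝ)) := by
  refine Submodule.span_le.mpr ?_
  rintro _ ⟨f, c, hf, rfl⟩
  have hc : cycLap m (fun _ => c) = fun v => ((0 : ℝ) : ℂ) * (fun _ => c) v := by
    funext v
    simp [cycLap]; ring
  exact Submodule.subset_span ⟨2 * (K : ℝ) + 0, by linarith, aux_tensor_eig hf hc⟩

theorem aux_le (N K m : ℕ) [NeZero m] :
    PWprod N m (2 * (K : ℝ)) ≤ S1 N K m ⊔ S2 N K m ⊔ S3 N K m := by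
  refine Submodule.span_le.mpr ?_
  rintro F ⟨μ, hμ, hF⟩
  let p1 : AddChar (Vtx N × ZMod m) ℂ → AddChar (Vtx N) ℂ :=
    fun ψ => ψ.compAddMonoidHom (AddMonoidHom.inl _ _)
  let p2 : AddChar (Vtx N × ZMod m) ℂ → AddChar (ZMod m) ℂ :=
    fun ψ => ψ.compAddMonoidHom (AddMonoidHom.inr _ _)
  have hsplit : ∀ ψ : AddChar (Vtx N × ZMod m) ℂ,
      (ψ : Vtx N × ZMod m → ℂ) = fun x => p1 ψ x.1 * p2 ψ x.2 := by
    intro ψ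
    funext x
    simp [p1, p2, ← AddChar.map_add_eq_mul]
  choose j hj using fun ψ => aux_cube_char (p1 ψ)
  choose b hb0 hb4 hb hbc using fun ψ => aux_cyc_char (p2 ψ)
  have hmem := aux_eig (prodLin N m) (fun ψ : AddChar (Vtx N × ZMod m) ℂ => (ψ : _ → ℂ))
    (fun ψ => ((2 * (j ψ : ℝ) + b ψ : ℝ) : ℂ))
    (by
      intro ψ
      show prodLap N m ψ = _
      rw [hsplit ψ]
      exact aux_tensor_eig (hj ψ) (hb ψ))
    (aux_span_char _) (μ : ℂ) F hF
  refine Submodule.span_le.mpr ?_ hmem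
  rintro _ ⟨ψ, hψ, rfl⟩
  have hψ' : 2 * (j ψ : ℝ) + b ψ = μ := by exact_mod_cast hψ
  have h0 := hb0 ψ
  have hjK : j ψ ≤ K := by
    have : (j ψ : ℝ) ≤ K := by linarith
    exact_mod_cast this
  show (ψ : _ → ℂ) ∈ _
  rw [hsplit ψ]
  rcases (by omega : j ψ + 2 ≤ K ∨ j ψ + 1 = K ∨ j ψ = K) with h | h | h
  · refine Submodule.mem_sup_left (Submodule.mem_sup_left (Submodule.subset_span
      ⟨_, _, Submodule.subset_span ⟨_, ?_, hj ψ⟩, rfl⟩))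
    have : (j ψ : ℝ) + 2 ≤ K := by exact_mod_cast h
    linarith
  · have h' : (j ψ : ℝ) + 1 = K := by exact_mod_cast h
    refine Submodule.mem_sup_left (Submodule.mem_sup_right (Submodule.subset_span
      ⟨_, _, ?_, Submodule.subset_span ⟨_, ?_, hb ψ⟩, rfl⟩))
    · rw [hj ψ, show 2 * (j ψ : ℝ) = 2 * K - 2 by linarith]
    · linarith
  · have h' : (j ψ : ℝ) = K := by exact_mod_cast h
    have hz := hbc ψ (by linarith)
    refine Submodule.mem_sup_right (Submodule.subset_span ⟨p1 ψ, 1, ?_, ?_⟩)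
    · rw [hj ψ, h']
    · funext x
      rw [hz]

/-- PW_{2K}(B_N □ C_m) is the orthogonal direct sum of the
components (i), (ii), (iii). -/
theorem stmt11 (N K m : ℕ) [NeZero m] (hK : 3 ≤ K) (hKN : K < N) (hm : 3 ≤ m) :
    (∀ F ∈ S1 N K m, ∀ G ∈ S2 N K m, ip F G = 0) ∧
    (∀ F ∈ S1 N K m, ∀ G ∈ S3 N K m, ip F G = 0) ∧
    (∀ F ∈ S2 N K m, ∀ G ∈ S3 N K m, ip F G = 0) ∧
    S1 N K m ⊔ S2 N K m ⊔ S3 N K m = PWprod N m (2 * (K : ℝ)) := by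
  refine ⟨?_, ?_, ?_, ?_⟩
  · refine aux_span ?_
    rintro _ ⟨f, g, hf, rfl⟩ _ ⟨f', g', hf', -, rfl⟩
    refine aux_ip_tensor f f' g g' (aux_span_left ?_ f hf)
    rintro h ⟨a, ha, hh⟩
    exact aux_orth (by intro e; linarith) hh hf'
  · refine aux_span ?_
    rintro _ ⟨f, g, hf, rfl⟩ _ ⟨f', c, hf', rfl⟩
    refine aux_ip_tensor f f' g (fun _ => c) (aux_span_left ?_ f hf)
    rintro h ⟨a, ha, hh⟩
    exact aux_orth (by intro e; linarith) hh hf'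
  · refine aux_span ?_
    rintro _ ⟨f, g, hf, -, rfl⟩ _ ⟨f', c, hf', rfl⟩
    exact aux_ip_tensor f f' g (fun _ => c) (aux_orth (by intro e; linarith) hf hf')
  · exact le_antisymm
      (sup_le (sup_le (aux_S1_le N K m) (aux_S2_le N K m)) (aux_S3_le N K m)) (aux_le N K m)
end
end

section
/- Let m = 4m' + 1 with m' ≥ 1, let 1 ≤ K ≤ N, and let ψ ∈ Λ_{2K−2}(B_N). Then the function F(u,ℓ) = ψ(u)·D̄_{m'}(ℓ) lies in PW_{2K}(B_N □ C_m) and satisfies PQF = (1/2 + 1/(2m))·F, where P is the orthogonal projection onto PW_{2K}(B_N □ C_m) and Q is truncation to the zero slice. Moreover, if {ψ_ν} is an orthonormal basis of Λ_{2K−2}(B_N), then every F in the span of {f ⊗ g : f ∈ Λ_{2K−2}(B_N), g ∈ PW_2(C_m)} satisfies Σ_ν |⟨F, Q(ψ_ν ⊗ D̄_{m'})⟩|² = (1/2 + 1/(2m))·‖QF‖². -/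
open Complex Finset
open scoped Real Classical

noncomputable section

/-- The Dirichlet kernel D_n(ℓ) = Σ_{k=−n}^{n} e^{2πikℓ/m} on ZMod m. -/
def dirK (m n : ℕ) : ZMod m → ℂ :=
  fun ℓ => ∑ k ∈ Finset.Icc (-(n : ℤ)) (n : ℤ),
    Complex.exp (2 * (π : ℂ) * Complex.I * k * ℓ.val / m)

/-- The normalized Dirichlet kernel D̄_n = D_n/√(m(2n+1)). -/
def dirKbar (m n : ℕ) : ZMod m → ℂ :=
  fun ℓ => dirK m n ℓ / (Real.sqrt (m * (2 * n + 1)) : ℂ)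

lemma h_cube_sa {N : ℕ} (a b : Vtx N → ℂ) :
    ∑ u, a u * cubeLap N b u = ∑ u, cubeLap N a u * b u := by
  have hs : ∀ u w : Vtx N, cubeAdj u w ↔ cubeAdj w u := by
    intro u w; unfold cubeAdj; simp only [ne_comm]
  simp only [cubeLap, Finset.sum_filter, Finset.mul_sum, Finset.sum_mul]
  have e1 : ∀ u w : Vtx N, a u * (if cubeAdj u w then b u - b w else 0) =
      (if cubeAdj u w then a u * b u else 0) - (if cubeAdj u w then a u * b w else 0) := by
    intro u w; split_ifs <;> ring
  have e2 : ∀ u w : Vtx N, (if cubeAdj u w then a u - a w else 0) * b u =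
      (if cubeAdj u w then a u * b u else 0) - (if cubeAdj u w then a w * b u else 0) := by
    intro u w; split_ifs <;> ring
  simp only [e1, e2, Finset.sum_sub_distrib]
  congr 1
  rw [Finset.sum_comm]
  refine Finset.sum_congr rfl fun u _ => Finset.sum_congr rfl fun w _ => ?_
  simp only [hs w u]

lemma h_cube_conj {N : ℕ} (b : Vtx N → ℂ) (u : Vtx N) :
    (starRingEnd ℂ) (cubeLap N b u) = cubeLap N (fun v => (starRingEnd ℂ) (b v)) u := by
  simp [cubeLap, map_sum]

lemma h_char {m : ℕ} [NeZero m] (k : ℤ) (l : ZMod m) :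
    Complex.exp (2 * (π : ℂ) * Complex.I * k * l.val / m) =
      ZMod.stdAddChar ((k : ZMod m) * l) := by
  have : ((k : ZMod m) * l) = ((k * (l.val : ℤ) : ℤ) : ZMod m) := by
    push_cast; simp
  rw [this, ZMod.stdAddChar_coe]
  push_cast; ring_nf

lemma h_two_cos {m : ℕ} [NeZero m] (k : ℤ) :
    (ZMod.stdAddChar (k : ZMod m) : ℂ) + ZMod.stdAddChar (-(k : ZMod m)) =
      ((2 * Real.cos (2 * π * k / m) : ℝ) : ℂ) := by
  have : (-(k : ZMod m)) = ((-k : ℤ) : ZMod m) := by push_cast; rfl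
  rw [this, ZMod.stdAddChar_coe, ZMod.stdAddChar_coe]
  push_cast
  rw [Complex.two_cos]
  congr 2 <;> ring

lemma h_cos_nonneg {n : ℕ} {k : ℤ} (h : |k| ≤ n) :
    0 ≤ Real.cos (2 * π * k / ((4 * n + 1 : ℕ) : ℝ)) := by
  have hk : |(k : ℝ)| ≤ n := by exact_mod_cast h
  obtain ⟨h1, h2⟩ := abs_le.mp hk
  have hp := Real.pi_pos
  have hn : (0 : ℝ) ≤ n := Nat.cast_nonneg n
  have hm : (0 : ℝ) < ((4 * n + 1 : ℕ) : ℝ) := by positivity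
  apply Real.cos_nonneg_of_neg_pi_div_two_le_of_le
  · rw [le_div_iff₀ hm]; push_cast; nlinarith
  · rw [div_le_iff₀ hm]; push_cast; nlinarith

lemma h_cos_neg {n : ℕ} {k : ℤ} (h : (n : ℤ) < |k|) (h' : |k| ≤ 2 * n) :
    Real.cos (2 * π * k / ((4 * n + 1 : ℕ) : ℝ)) < 0 := by
  have hp := Real.pi_pos
  have hn : (0 : ℝ) ≤ n := Nat.cast_nonneg n
  have hm : (0 : ℝ) < ((4 * n + 1 : ℕ) : ℝ) := by positivity
  have hk : (n : ℝ) + 1 ≤ |(k : ℝ)| := by exact_mod_cast h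
  have hk' : |(k : ℝ)| ≤ 2 * n := by exact_mod_cast h'
  rw [← Real.cos_abs, abs_div, abs_mul, abs_of_pos hm, abs_of_pos (by positivity : 0 < 2 * π)]
  apply Real.cos_neg_of_pi_div_two_lt_of_lt
  · rw [lt_div_iff₀ hm]; push_cast; nlinarith
  · rw [div_lt_iff₀ hm]; push_cast; nlinarith

lemma h_dirK_zero (m n : ℕ) [NeZero m] : dirK m n 0 = 2 * n + 1 := by
  simp only [dirK, ZMod.val_zero]
  simp
  have : ((n : ℤ) + 1 + n).toNat = 2 * n + 1 := by omega
  rw [this]; push_cast; ring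

lemma h_repro (m n : ℕ) [NeZero m] (hm : m = 4 * n + 1) (g : ZMod m → ℂ) (lam : ℝ) (hl : lam ≤ 2)
    (hg : ∀ l, 2 * g l - g (l + 1) - g (l - 1) = lam * g l) :
    (m : ℂ) * g 0 = ∑ l, dirK m n l * g l := by
  set gh : ZMod m → ℂ := fun k => ∑ l, (ZMod.stdAddChar (k * l) : ℂ) * g l with hgh
  have eig : ∀ k : ZMod m,
      (2 - (ZMod.stdAddChar k + ZMod.stdAddChar (-k)) - lam : ℂ) * gh k = 0 := by
    intro k
    have a1 : ∑ l, (ZMod.stdAddChar (k * l) : ℂ) * g (l + 1) = ZMod.stdAddChar (-k) * gh k := by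
      rw [hgh, Finset.mul_sum]
      refine Fintype.sum_equiv (Equiv.addRight (1 : ZMod m)) _ _ fun l => ?_
      simp only [Equiv.coe_addRight]
      rw [← mul_assoc, ← AddChar.map_add_eq_mul]
      congr 3; ring
    have a2 : ∑ l, (ZMod.stdAddChar (k * l) : ℂ) * g (l - 1) = ZMod.stdAddChar k * gh k := by
      rw [hgh, Finset.mul_sum]
      refine Fintype.sum_equiv (Equiv.subRight (1 : ZMod m)) _ _ fun l => ?_
      simp only [Equiv.subRight_apply]
      rw [← mul_assoc, ← AddChar.map_add_eq_mul]
      congr 3; ring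
    have a3 : ∑ l, (ZMod.stdAddChar (k * l) : ℂ) * (2 * g l - g (l + 1) - g (l - 1)) =
        lam * gh k := by
      simp only [hg]
      rw [hgh, Finset.mul_sum]
      refine Finset.sum_congr rfl fun l _ => by ring
    have a4 : ∑ l, (ZMod.stdAddChar (k * l) : ℂ) * (2 * g l - g (l + 1) - g (l - 1)) =
        2 * gh k - ZMod.stdAddChar (-k) * gh k - ZMod.stdAddChar k * gh k := by
      rw [← a1, ← a2, hgh, Finset.mul_sum, ← Finset.sum_sub_distrib, ← Finset.sum_sub_distrib]
      refine Finset.sum_congr rfl fun l _ => by ring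
    linear_combination a3 - a4
  have van : ∀ k : ℤ, (n : ℤ) < |k| → |k| ≤ 2 * n → gh (k : ZMod m) = 0 := by
    intro k h1 h2
    have e := eig k
    rw [h_two_cos] at e
    have c := h_cos_neg h1 h2
    rcases mul_eq_zero.mp e with e | e
    · exfalso
      have : (2 - 2 * Real.cos (2 * π * k / m) - lam : ℝ) = 0 := by exact_mod_cast e
      rw [hm] at this
      linarith
    · exact e
  have tot : ∑ k, gh k = (m : ℂ) * g 0 := by
    rw [hgh, Finset.sum_comm]
    simp_rw [← Finset.sum_mul]
    have : ∀ l : ZMod m, ∑ k : ZMod m, (ZMod.stdAddChar (k * l) : ℂ) = if l = 0 then (m : ℂ) else 0 := by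
      intro l
      have := AddChar.sum_mulShift l (ZMod.isPrimitive_stdAddChar m)
      rw [ZMod.card] at this
      exact_mod_cast this
    simp [this]
  rw [← tot]
  have dk : ∑ l, dirK m n l * g l = ∑ k ∈ Finset.Icc (-(n : ℤ)) n, gh (k : ZMod m) := by
    simp only [dirK, h_char, hgh, Finset.sum_mul]
    rw [Finset.sum_comm]
  rw [dk, ← Finset.sum_image (f := gh) (g := fun k : ℤ => (k : ZMod m))]
  · symm
    apply Finset.sum_subset (Finset.subset_univ _)
    intro k _ hk
    have hv : ((k.valMinAbs : ℤ) : ZMod m) = k := ZMod.coe_valMinAbs k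
    have hb := ZMod.natAbs_valMinAbs_le k
    rw [← hv]
    apply van
    · by_contra hc
      apply hk
      rw [Finset.mem_image]
      refine ⟨k.valMinAbs, ?_, hv⟩
      rw [Finset.mem_Icc]
      exact abs_le.mp (not_lt.mp hc)
    · rw [Int.abs_eq_natAbs]; omega
  · intro a ha b hb hab
    simp only [Finset.coe_Icc, Set.mem_Icc] at ha hb
    have := (ZMod.intCast_eq_intCast_iff_dvd_sub a b m).mp hab
    have h0 := Int.eq_zero_of_abs_lt_dvd this (by rw [abs_lt]; omega)
    omega

lemma h_mem (N K n : ℕ) (ψ : Vtx N → ℂ)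
    (hψ : cubeLap N ψ = fun v => ((2 * (K : ℝ) - 2 : ℝ) : ℂ) * ψ v) :
    (fun x : Vtx N × ZMod (4 * n + 1) => ψ x.1 * dirKbar (4 * n + 1) n x.2) ∈
        PWprod N (4 * n + 1) (2 * (K : ℝ)) := by
  have e : (fun x : Vtx N × ZMod (4 * n + 1) => ψ x.1 * dirKbar (4 * n + 1) n x.2) =
      ((Real.sqrt ((4 * n + 1 : ℕ) * (2 * n + 1)) : ℂ))⁻¹ •
        ∑ k ∈ Finset.Icc (-(n : ℤ)) n, fun x : Vtx N × ZMod (4 * n + 1) =>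
          ψ x.1 * (ZMod.stdAddChar ((k : ZMod (4 * n + 1)) * x.2) : ℂ) := by
    funext x
    simp only [dirKbar, dirK, h_char, Pi.smul_apply, Finset.sum_apply, smul_eq_mul,
      ← Finset.mul_sum]
    rw [div_eq_mul_inv]; ring
  rw [e]
  refine Submodule.smul_mem _ _ (Submodule.sum_mem _ fun k hk => Submodule.subset_span ?_)
  refine ⟨2 * K - 2 * Real.cos (2 * π * k / ((4 * n + 1 : ℕ) : ℝ)), ?_, ?_⟩
  · have := h_cos_nonneg (n := n) (k := k) (abs_le.mpr (Finset.mem_Icc.mp hk))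
    linarith
  · funext x
    have hc := h_two_cos (m := 4 * n + 1) k
    have h1 := congrFun hψ x.1
    have h2 : cubeLap N (fun u => ψ u * (ZMod.stdAddChar ((k : ZMod (4 * n + 1)) * x.2) : ℂ)) x.1
        = cubeLap N ψ x.1 * (ZMod.stdAddChar ((k : ZMod (4 * n + 1)) * x.2) : ℂ) := by
      simp only [cubeLap, Finset.sum_mul, sub_mul]
    simp only [prodLap]
    rw [h2, h1, mul_add, mul_sub, mul_one, sub_eq_add_neg ((k : ZMod (4 * n + 1)) * x.2), AddChar.map_add_eq_mul,
      AddChar.map_add_eq_mul]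
    push_cast at hc ⊢
    linear_combination (-ψ x.1 * ZMod.stdAddChar ((k : ZMod (4 * n + 1)) * x.2)) * hc

lemma h_c (n : ℕ) : (((1 / 2 + 1 / (2 * ((4 * n + 1 : ℕ) : ℝ)) : ℝ) : ℂ)) * ((4 * n + 1 : ℕ) : ℂ)
    = 2 * n + 1 := by
  have : ((4 * n + 1 : ℕ) : ℂ) ≠ 0 := Nat.cast_ne_zero.mpr (Nat.succ_ne_zero _)
  push_cast at this ⊢
  field_simp; ring

lemma h_proj (N K n : ℕ) (ψ : Vtx N → ℂ)
    (hψ : cubeLap N ψ = fun v => ((2 * (K : ℝ) - 2 : ℝ) : ℂ) * ψ v)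
    (G : Vtx N × ZMod (4 * n + 1) → ℂ) (mu : ℝ) (hmu : mu ≤ 2 * K)
    (hG : prodLap N (4 * n + 1) G = fun x => (mu : ℂ) * G x) :
    ip (Qslice N (4 * n + 1) (fun x => ψ x.1 * dirKbar (4 * n + 1) n x.2)) G =
        ip (fun x => ((1 / 2 + 1 / (2 * ((4 * n + 1 : ℕ) : ℝ)) : ℝ) : ℂ) *
          (ψ x.1 * dirKbar (4 * n + 1) n x.2)) G := by
  set g : ZMod (4 * n + 1) → ℂ := fun l => ∑ u, ψ u * (starRingEnd ℂ) (G (u, l)) with hg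
  have eig : ∀ l, 2 * g l - g (l + 1) - g (l - 1) = ((mu - (2 * K - 2) : ℝ) : ℂ) * g l := by
    intro l
    have h1 := h_cube_sa ψ (fun u => (starRingEnd ℂ) (G (u, l)))
    have h2 : ∀ u, cubeLap N (fun u => (starRingEnd ℂ) (G (u, l))) u +
        (2 * (starRingEnd ℂ) (G (u, l)) - (starRingEnd ℂ) (G (u, l + 1))
          - (starRingEnd ℂ) (G (u, l - 1))) = mu * (starRingEnd ℂ) (G (u, l)) := by
      intro u
      have := congrArg (starRingEnd ℂ) (congrFun hG (u, l))
      simp only [prodLap, map_add, map_sub, map_mul, h_cube_conj, Complex.conj_ofReal] at this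
      rw [Complex.conj_ofNat] at this
      exact this
    have h3 : ∑ u, ψ u * (cubeLap N (fun u => (starRingEnd ℂ) (G (u, l))) u +
        (2 * (starRingEnd ℂ) (G (u, l)) - (starRingEnd ℂ) (G (u, l + 1))
          - (starRingEnd ℂ) (G (u, l - 1)))) = mu * g l := by
      simp only [h2]
      rw [hg, Finset.mul_sum]
      exact Finset.sum_congr rfl fun u _ => by ring
    have h4 : ∑ u, cubeLap N ψ u * (starRingEnd ℂ) (G (u, l)) = ((2 * K - 2 : ℝ) : ℂ) * g l := by
      rw [hψ, hg, Finset.mul_sum]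
      exact Finset.sum_congr rfl fun u _ => by ring
    have h5 : 2 * g l - g (l + 1) - g (l - 1) = ∑ u, ψ u * (2 * (starRingEnd ℂ) (G (u, l))
        - (starRingEnd ℂ) (G (u, l + 1)) - (starRingEnd ℂ) (G (u, l - 1))) := by
      rw [hg, Finset.mul_sum, ← Finset.sum_sub_distrib, ← Finset.sum_sub_distrib]
      exact Finset.sum_congr rfl fun u _ => by ring
    simp only [mul_add, Finset.sum_add_distrib] at h3
    rw [← h5, h1, h4] at h3
    push_cast at h3 ⊢
    linear_combination h3
  have rep := h_repro (4 * n + 1) n rfl g _ (by linarith) eig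
  have hL : ip (Qslice N (4 * n + 1) (fun x => ψ x.1 * dirKbar (4 * n + 1) n x.2)) G =
      dirKbar (4 * n + 1) n 0 * g 0 := by
    simp only [ip, Qslice]
    rw [Fintype.sum_prod_type, hg, Finset.mul_sum]
    refine Finset.sum_congr rfl fun u _ => ?_
    rw [Finset.sum_eq_single 0]
    · simp; ring
    · intro l _ hl; simp [hl]
    · simp
  have hR : ip (fun x => ((1 / 2 + 1 / (2 * ((4 * n + 1 : ℕ) : ℝ)) : ℝ) : ℂ) *
          (ψ x.1 * dirKbar (4 * n + 1) n x.2)) G =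
      ((1 / 2 + 1 / (2 * ((4 * n + 1 : ℕ) : ℝ)) : ℝ) : ℂ) *
        ∑ l, dirKbar (4 * n + 1) n l * g l := by
    simp only [ip]
    rw [Fintype.sum_prod_type, Finset.sum_comm, Finset.mul_sum]
    refine Finset.sum_congr rfl fun l _ => ?_
    rw [hg, Finset.mul_sum, Finset.mul_sum]
    exact Finset.sum_congr rfl fun u _ => by ring
  rw [hL, hR]
  have hs : ∑ l, dirKbar (4 * n + 1) n l * g l =
      (∑ l, dirK (4 * n + 1) n l * g l) / (Real.sqrt ((4 * n + 1 : ℕ) * (2 * n + 1)) : ℂ) := by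
    rw [Finset.sum_div]
    exact Finset.sum_congr rfl fun l _ => by simp only [dirKbar]; ring
  rw [hs, ← rep, dirKbar, h_dirK_zero, ← h_c n]
  ring

lemma h_parseval {N d : ℕ} (ψs : Fin d → (Vtx N → ℂ))
    (ho : ∀ ν ν', ip (ψs ν) (ψs ν') = if ν = ν' then 1 else 0)
    (h : Vtx N → ℂ) (hh : h ∈ Submodule.span ℂ (Set.range ψs)) :
    ∑ ν, ‖ip h (ψs ν)‖ ^ 2 = ∑ u, ‖h u‖ ^ 2 := by
  obtain ⟨a, rfl⟩ := (Submodule.mem_span_range_iff_exists_fun ℂ).mp hh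
  set h := ∑ i, a i • ψs i with hdef
  have hip : ∀ ν, ip h (ψs ν) = a ν := by
    intro ν
    have : ip h (ψs ν) = ∑ i, a i * ip (ψs i) (ψs ν) := by
      simp only [ip, hdef, Finset.sum_apply, Pi.smul_apply, smul_eq_mul, Finset.sum_mul,
        Finset.mul_sum]
      rw [Finset.sum_comm]
      simp only [mul_assoc]
    rw [this]; simp [ho]
  have h2 : ip h h = ∑ ν, (starRingEnd ℂ) (a ν) * ip h (ψs ν) := by
    have : ip h h = ∑ u, h u * (starRingEnd ℂ) (∑ i, a i * ψs i u) := by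
      simp [ip, hdef]
    rw [this]
    simp only [ip, map_sum, map_mul, Finset.mul_sum]
    rw [Finset.sum_comm]
    exact Finset.sum_congr rfl fun _ _ => Finset.sum_congr rfl fun _ _ => by ring
  have h3 : ip h h = ((∑ u, ‖h u‖ ^ 2 : ℝ) : ℂ) := by
    simp only [ip, Complex.mul_conj']
    push_cast; rfl
  have h4 : ∑ ν, (starRingEnd ℂ) (a ν) * ip h (ψs ν) = ((∑ ν, ‖ip h (ψs ν)‖ ^ 2 : ℝ) : ℂ) := by
    simp only [hip, Complex.conj_mul']
    push_cast; rfl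
  rw [h4, h3] at h2
  exact_mod_cast h2.symm

lemma h_slice (N K m : ℕ) (F : Vtx N × ZMod m → ℂ) (hF : F ∈ S2 N K m) :
    cubeLap N (fun u => F (u, 0)) = fun v => ((2 * (K : ℝ) - 2 : ℝ) : ℂ) * F (v, 0) := by
  unfold S2 at hF
  induction hF using Submodule.span_induction with
  | mem F hF =>
    obtain ⟨f, g, hf, -, rfl⟩ := hF
    funext v
    have : cubeLap N (fun u => f u * g 0) v = cubeLap N f v * g 0 := by
      simp only [cubeLap, Finset.sum_mul, sub_mul]
    simp only [this, hf]; ring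
  | zero => funext v; simp [cubeLap]
  | add F G _ _ hF hG =>
    funext v
    have : cubeLap N (fun u => (F + G) (u, 0)) v =
        cubeLap N (fun u => F (u, 0)) v + cubeLap N (fun u => G (u, 0)) v := by
      simp only [cubeLap, Pi.add_apply, ← Finset.sum_add_distrib]
      exact Finset.sum_congr rfl fun _ _ => by ring
    rw [this, hF, hG]; simp only [Pi.add_apply]; ring
  | smul c F _ hF =>
    funext v
    have : cubeLap N (fun u => (c • F) (u, 0)) v = c * cubeLap N (fun u => F (u, 0)) v := by
      simp only [cubeLap, Pi.smul_apply, smul_eq_mul, Finset.mul_sum, mul_sub]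
    rw [this, hF]; simp only [Pi.smul_apply, smul_eq_mul]; ring

lemma h_dirKbar_sq (n : ℕ) : ‖dirKbar (4 * n + 1) n 0‖ ^ 2 =
    1 / 2 + 1 / (2 * ((4 * n + 1 : ℕ) : ℝ)) := by
  rw [dirKbar, h_dirK_zero]
  have : (2 * (n : ℂ) + 1) = ((2 * n + 1 : ℝ) : ℂ) := by push_cast; rfl
  rw [this, ← Complex.ofReal_div, Complex.norm_real, Real.norm_eq_abs, sq_abs, div_pow,
    Real.sq_sqrt (by positivity)]
  push_cast
  field_simp; ring

/-- for m = 4m'+1 and ψ ∈ Λ_{2K−2}(B_N), the function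
F = ψ ⊗ D̄_{m'} lies in PW_{2K}(B_N □ C_m) and PQF = (1/2 + 1/(2m))·F
(P(QF) = cF is expressed by: cF ∈ PW and QF − cF ⊥ PW_{2K}); moreover for an
orthonormal basis {ψ_ν} of Λ_{2K−2}(B_N), every F in the span of
Λ_{2K−2}(B_N) ⊗ PW_2(C_m) satisfies
Σ_ν |⟨F, Q(ψ_ν ⊗ D̄_{m'})⟩|² = (1/2 + 1/(2m))·‖QF‖². -/
theorem stmt15 (N K m' : ℕ) (hm' : 1 ≤ m') (hK : 1 ≤ K) (hKN : K ≤ N)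
    (ψ : Vtx N → ℂ)
    (hψ : cubeLap N ψ = fun v => ((2 * (K : ℝ) - 2 : ℝ) : ℂ) * ψ v) :
    (fun x : Vtx N × ZMod (4 * m' + 1) => ψ x.1 * dirKbar (4 * m' + 1) m' x.2) ∈
        PWprod N (4 * m' + 1) (2 * (K : ℝ)) ∧
    (∀ G ∈ PWprod N (4 * m' + 1) (2 * (K : ℝ)),
      ip (Qslice N (4 * m' + 1) (fun x => ψ x.1 * dirKbar (4 * m' + 1) m' x.2)) G =
        ip (fun x => ((1 / 2 + 1 / (2 * ((4 * m' + 1 : ℕ) : ℝ)) : ℝ) : ℂ) *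
          (ψ x.1 * dirKbar (4 * m' + 1) m' x.2)) G) ∧
    (∀ ψs : Fin (N.choose (K - 1)) → (Vtx N → ℂ),
      (∀ ν, cubeLap N (ψs ν) = fun v => ((2 * (K : ℝ) - 2 : ℝ) : ℂ) * ψs ν v) →
      (∀ ν ν', ip (ψs ν) (ψs ν') = if ν = ν' then 1 else 0) →
      (∀ f : Vtx N → ℂ, (cubeLap N f = fun v => ((2 * (K : ℝ) - 2 : ℝ) : ℂ) * f v) →
        f ∈ Submodule.span ℂ (Set.range ψs)) →
      ∀ F ∈ S2 N K (4 * m' + 1),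
        ∑ ν, ‖ip F (Qslice N (4 * m' + 1)
            (fun x => ψs ν x.1 * dirKbar (4 * m' + 1) m' x.2))‖ ^ 2 =
          (1 / 2 + 1 / (2 * ((4 * m' + 1 : ℕ) : ℝ))) *
            ∑ x, ‖Qslice N (4 * m' + 1) F x‖ ^ 2) := by
  refine ⟨h_mem N K m' ψ hψ, ?_, ?_⟩
  · intro G hG
    unfold PWprod at hG
    induction hG using Submodule.span_induction with
    | mem G hG =>
      obtain ⟨mu, h1, h2⟩ := hG
      exact h_proj N K m' ψ hψ G mu h1 h2
    | zero => simp [ip]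
    | add F G _ _ hF hG =>
      simp only [ip, Pi.add_apply, map_add, mul_add, Finset.sum_add_distrib] at hF hG ⊢
      rw [hF, hG]
    | smul c F _ hF =>
      simp only [ip, Pi.smul_apply, smul_eq_mul, map_mul, mul_left_comm _ ((starRingEnd ℂ) c),
        ← Finset.mul_sum] at hF ⊢
      rw [hF]
  · intro ψs _ ho hsp F hF
    have hp := h_parseval ψs ho _ (hsp _ (h_slice N K _ F hF))
    have h1 : ∀ ν, ip F (Qslice N (4 * m' + 1)
            (fun x => ψs ν x.1 * dirKbar (4 * m' + 1) m' x.2)) =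
        (starRingEnd ℂ) (dirKbar (4 * m' + 1) m' 0) * ip (fun u => F (u, 0)) (ψs ν) := by
      intro ν
      simp only [ip, Qslice]
      rw [Fintype.sum_prod_type, Finset.mul_sum]
      refine Finset.sum_congr rfl fun u _ => ?_
      rw [Finset.sum_eq_single 0]
      · simp; ring
      · intro l _ hl; simp [hl]
      · simp
    have h2 : ∑ x, ‖Qslice N (4 * m' + 1) F x‖ ^ 2 = ∑ u, ‖F (u, 0)‖ ^ 2 := by
      simp only [Qslice]
      rw [Fintype.sum_prod_type]
      refine Finset.sum_congr rfl fun u _ => ?_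
      rw [Finset.sum_eq_single 0]
      · simp
      · intro l _ hl; simp [hl]
      · simp
    simp only [h1, norm_mul, mul_pow, RCLike.norm_conj, h_dirKbar_sq, ← Finset.mul_sum]
    rw [hp, h2]
end
end

section
/- Let m ≥ 3, let 1 ≤ K ≤ N, and let ψ ∈ Λ_{2K}(B_N). Then the function F(u,ℓ) = ψ(u)/√m (constant in ℓ) lies in PW_{2K}(B_N □ C_m) and satisfies PQF = (1/m)·F, where P is the orthogonal projection onto PW_{2K}(B_N □ C_m) and Q is truncation to the zero slice. Moreover, if {ψ_ν} is an orthonormal basis of Λ_{2K}(B_N), then every F in the span of {f ⊗ 𝟙/√m : f ∈ Λ_{2K}(B_N)} (𝟙 the constant function 1 on ZMod m) satisfies Σ_ν |⟨F, Q(ψ_ν ⊗ 𝟙/√m)⟩|² = (1/m)·‖QF‖². -/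
open Complex Finset
open scoped Real Classical

noncomputable section

theorem aux_cubeAdj_symm {N : ℕ} (v w : Vtx N) : cubeAdj v w ↔ cubeAdj w v := by
  unfold cubeAdj
  simp only [ne_comm]

theorem aux_cubeLap_selfadj (N : ℕ) (f g : Vtx N → ℂ) :
    ip f (cubeLap N g) = ip (cubeLap N f) g := by
  unfold ip cubeLap
  simp only [Finset.sum_filter, map_sum, Finset.mul_sum, Finset.sum_mul]
  rw [← sub_eq_zero, ← Finset.sum_sub_distrib]
  simp only [← Finset.sum_sub_distrib]
  have h1 : ∀ v w : Vtx N,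
      (f v * (starRingEnd ℂ) (if cubeAdj v w then g v - g w else 0) -
        (if cubeAdj v w then f v - f w else 0) * (starRingEnd ℂ) (g v)) =
      (if cubeAdj v w then f w * (starRingEnd ℂ) (g v) else 0) -
      (if cubeAdj w v then f v * (starRingEnd ℂ) (g w) else 0) := by
    intro v w
    by_cases hvw : cubeAdj v w
    · have hwv := (aux_cubeAdj_symm v w).1 hvw
      rw [if_pos hvw, if_pos hvw, if_pos hvw, if_pos hwv, map_sub]; ring
    · have hwv := fun h => hvw ((aux_cubeAdj_symm v w).2 h)
      rw [if_neg hvw, if_neg hvw, if_neg hvw, if_neg hwv]; simp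
  simp only [h1, Finset.sum_sub_distrib]
  rw [sub_eq_zero, Finset.sum_comm]

theorem aux_cyc_const (m : ℕ) [NeZero m] (h : ZMod m → ℂ) (t : ℝ) (ht : t ≤ 0)
    (hh : ∀ ℓ, 2 * h ℓ - h (ℓ + 1) - h (ℓ - 1) = (t : ℂ) * h ℓ) :
    ∀ ℓ, h ℓ = h 0 := by
  have e : ((∑ ℓ, ‖h (ℓ + 1) - h ℓ‖ ^ 2 : ℝ) : ℂ) = ((t * ∑ ℓ, ‖h ℓ‖ ^ 2 : ℝ) : ℂ) := by
    push_cast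
    simp only [← Complex.mul_conj']
    rw [Finset.mul_sum]
    have s1 : ∑ ℓ, h (ℓ + 1) * (starRingEnd ℂ) (h (ℓ + 1)) = ∑ ℓ, h ℓ * (starRingEnd ℂ) (h ℓ) :=
      Equiv.sum_comp (Equiv.addRight (1 : ZMod m)) (fun ℓ => h ℓ * (starRingEnd ℂ) (h ℓ))
    have s2 : ∑ ℓ, h ℓ * (starRingEnd ℂ) (h (ℓ + 1)) = ∑ ℓ, h (ℓ - 1) * (starRingEnd ℂ) (h ℓ) := by
      rw [← Equiv.sum_comp (Equiv.addRight (1 : ZMod m)) (fun ℓ => h (ℓ - 1) * (starRingEnd ℂ) (h ℓ))]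
      simp
    have s3 : ∀ ℓ, (t : ℂ) * (h ℓ * (starRingEnd ℂ) (h ℓ)) =
        h ℓ * (starRingEnd ℂ) (h ℓ) + h ℓ * (starRingEnd ℂ) (h ℓ)
        - h (ℓ + 1) * (starRingEnd ℂ) (h ℓ) - h (ℓ - 1) * (starRingEnd ℂ) (h ℓ) := by
      intro ℓ
      rw [← mul_assoc, ← hh]; ring
    have s4 : ∀ ℓ, (h (ℓ + 1) - h ℓ) * (starRingEnd ℂ) (h (ℓ + 1) - h ℓ) =
        h (ℓ + 1) * (starRingEnd ℂ) (h (ℓ + 1)) + h ℓ * (starRingEnd ℂ) (h ℓ)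
        - h (ℓ + 1) * (starRingEnd ℂ) (h ℓ) - h ℓ * (starRingEnd ℂ) (h (ℓ + 1)) := by
      intro ℓ
      rw [map_sub]; ring
    simp only [s3, s4, Finset.sum_sub_distrib, Finset.sum_add_distrib, s1, s2]
  have e' := Complex.ofReal_injective e
  have h0 : ∑ ℓ, ‖h (ℓ + 1) - h ℓ‖ ^ 2 = 0 := by
    apply le_antisymm
    · rw [e']
      exact mul_nonpos_of_nonpos_of_nonneg ht (Finset.sum_nonneg fun _ _ => by positivity)
    · exact Finset.sum_nonneg fun _ _ => by positivity
  rw [Finset.sum_eq_zero_iff_of_nonneg (fun _ _ => by positivity)] at h0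
  have h1 : ∀ ℓ, h (ℓ + 1) = h ℓ := by
    intro ℓ
    have := h0 ℓ (Finset.mem_univ _)
    rw [sq_eq_zero_iff, norm_eq_zero, sub_eq_zero] at this
    exact this
  have h2 : ∀ n : ℕ, h (n : ZMod m) = h 0 := by
    intro n
    induction n with
    | zero => simp
    | succ k ih => rw [Nat.cast_succ, h1, ih]
  intro ℓ
  rw [← ZMod.natCast_zmod_val ℓ]
  exact h2 _

theorem aux_eig_s16 (N K m : ℕ) [NeZero m] (ψ : Vtx N → ℂ)
    (hψ : cubeLap N ψ = fun v => ((2 * (K : ℝ) : ℝ) : ℂ) * ψ v)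
    (G : Vtx N × ZMod m → ℂ) (hG : G ∈ PWprod N m (2 * (K : ℝ))) :
    ∀ ℓ, ip ψ (fun u => G (u, ℓ)) = ip ψ (fun u => G (u, 0)) := by
  unfold PWprod at hG
  induction hG using Submodule.span_induction with
  | mem G hG =>
    obtain ⟨μ, hμ, hG⟩ := hG
    apply aux_cyc_const m (fun ℓ => ip ψ (fun u => G (u, ℓ))) (μ - 2 * K) (by linarith)
    intro ℓ
    have a := aux_cubeLap_selfadj N ψ (fun u => G (u, ℓ))
    have b : cubeLap N (fun u => G (u, ℓ)) =
        fun u => (μ : ℂ) * G (u, ℓ) - (2 * G (u, ℓ) - G (u, ℓ + 1) - G (u, ℓ - 1)) := by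
      funext u
      have := congrFun hG (u, ℓ)
      simp only [prodLap] at this
      rw [← this]; ring
    rw [b, hψ] at a
    have l : ip ψ (fun u => (μ : ℂ) * G (u, ℓ) - (2 * G (u, ℓ) - G (u, ℓ + 1) - G (u, ℓ - 1)))
        = μ * ip ψ (fun u => G (u, ℓ)) - (2 * ip ψ (fun u => G (u, ℓ))
          - ip ψ (fun u => G (u, ℓ + 1)) - ip ψ (fun u => G (u, ℓ - 1))) := by
      unfold ip
      simp only [Finset.mul_sum, ← Finset.sum_sub_distrib]
      refine Finset.sum_congr rfl fun u _ => ?_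
      simp only [map_sub, map_mul, Complex.conj_ofReal, Complex.conj_ofNat]
      ring
    have r : ip (fun v => ((2 * (K : ℝ) : ℝ) : ℂ) * ψ v) (fun u => G (u, ℓ)) =
        ((2 * (K : ℝ) : ℝ) : ℂ) * ip ψ (fun u => G (u, ℓ)) := by
      unfold ip
      simp only [Finset.mul_sum, mul_assoc]
    rw [l, r] at a
    push_cast at a ⊢
    linear_combination -a
  | zero => intro ℓ; simp [ip]
  | add x y _ _ hx hy =>
    intro ℓ
    have hx := hx ℓ
    have hy := hy ℓ
    simp only [ip, Pi.add_apply, map_add, mul_add, Finset.sum_add_distrib] at *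
    rw [hx, hy]
  | smul a x _ hx =>
    intro ℓ
    have hx := hx ℓ
    simp only [ip, Pi.smul_apply, smul_eq_mul, map_mul, mul_left_comm _ ((starRingEnd ℂ) a),
      ← Finset.mul_sum] at *
    rw [hx]

theorem aux_S3 (N K m : ℕ) (F : Vtx N × ZMod m → ℂ) (hF : F ∈ S3 N K m) :
    ∃ φ : Vtx N → ℂ, (cubeLap N φ = fun v => ((2 * (K : ℝ) : ℝ) : ℂ) * φ v) ∧
      F = fun x => φ x.1 := by
  have hsm : ∀ (c : ℂ) (f : Vtx N → ℂ),
      (cubeLap N f = fun v => ((2 * (K : ℝ) : ℝ) : ℂ) * f v) →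
      cubeLap N (fun v => c * f v) = fun v => ((2 * (K : ℝ) : ℝ) : ℂ) * (c * f v) := by
    intro c f hf
    funext v
    have := congrFun hf v
    simp only [cubeLap] at this ⊢
    simp only [← mul_sub, ← Finset.mul_sum]
    rw [this]; ring
  unfold S3 at hF
  induction hF using Submodule.span_induction with
  | mem G hG =>
    obtain ⟨f, c, hf, rfl⟩ := hG
    exact ⟨_, hsm c f hf, by funext x; ring⟩
  | zero => exact ⟨fun _ => 0, by funext v; simp [cubeLap], rfl⟩
  | add x y _ _ hx hy =>
    obtain ⟨f, hf, rfl⟩ := hx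
    obtain ⟨g, hg, rfl⟩ := hy
    refine ⟨fun v => f v + g v, ?_, rfl⟩
    funext v
    have h1 := congrFun hf v
    have h2 := congrFun hg v
    simp only [cubeLap] at h1 h2 ⊢
    rw [mul_add, ← h1, ← h2, ← Finset.sum_add_distrib]
    exact Finset.sum_congr rfl fun _ _ => by ring
  | smul a x _ hx =>
    obtain ⟨f, hf, rfl⟩ := hx
    exact ⟨_, hsm a f hf, rfl⟩

theorem aux_parseval {α ι : Type*} [Fintype α] [Fintype ι] [DecidableEq ι] (b : ι → α → ℂ)
    (hb : ∀ i j, ip (b i) (b j) = if i = j then 1 else 0)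
    (φ : α → ℂ) (hφ : φ ∈ Submodule.span ℂ (Set.range b)) :
    ∑ i, ‖ip φ (b i)‖ ^ 2 = ∑ x, ‖φ x‖ ^ 2 := by
  obtain ⟨c, hc⟩ := (Submodule.mem_span_range_iff_exists_fun ℂ).1 hφ
  have key : ∀ g : α → ℂ, ip φ g = ∑ i, c i * ip (b i) g := by
    intro g
    rw [← hc]
    simp only [ip, Finset.sum_apply, Pi.smul_apply, smul_eq_mul, Finset.sum_mul, Finset.mul_sum]
    rw [Finset.sum_comm]
    exact Finset.sum_congr rfl fun _ _ => Finset.sum_congr rfl fun _ _ => by ring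
  have hcoef : ∀ j, ip φ (b j) = c j := by
    intro j
    rw [key]
    simp [hb]
  have hconj : ∀ i, ip (b i) φ = (starRingEnd ℂ) (c i) := by
    intro i
    rw [← hcoef i]
    simp only [ip, map_sum, map_mul, Complex.conj_conj, mul_comm]
  apply Complex.ofReal_injective
  push_cast
  simp only [← Complex.mul_conj']
  have := key φ
  simp only [hconj] at this
  simp only [hcoef]
  exact this.symm

/-- for ψ ∈ Λ_{2K}(B_N), the function F(u,ℓ) = ψ(u)/√m lies in
PW_{2K}(B_N □ C_m) and PQF = (1/m)·F (P(QF) = cF is expressed by: cF ∈ PW and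
QF − cF ⊥ PW_{2K}); moreover for an orthonormal basis {ψ_ν} of Λ_{2K}(B_N),
every F in the span of {f ⊗ 𝟙/√m : f ∈ Λ_{2K}(B_N)} satisfies
Σ_ν |⟨F, Q(ψ_ν ⊗ 𝟙/√m)⟩|² = (1/m)·‖QF‖². -/
theorem stmt16 (N K m : ℕ) [NeZero m] (hm : 3 ≤ m) (hK : 1 ≤ K) (hKN : K ≤ N)
    (ψ : Vtx N → ℂ)
    (hψ : cubeLap N ψ = fun v => ((2 * (K : ℝ) : ℝ) : ℂ) * ψ v) :
    (fun x : Vtx N × ZMod m => ψ x.1 / (Real.sqrt m : ℂ)) ∈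
        PWprod N m (2 * (K : ℝ)) ∧
    (∀ G ∈ PWprod N m (2 * (K : ℝ)),
      ip (Qslice N m (fun x => ψ x.1 / (Real.sqrt m : ℂ))) G =
        ip (fun x => ((1 / (m : ℝ) : ℝ) : ℂ) * (ψ x.1 / (Real.sqrt m : ℂ))) G) ∧
    (∀ ψs : Fin (N.choose K) → (Vtx N → ℂ),
      (∀ ν, cubeLap N (ψs ν) = fun v => ((2 * (K : ℝ) : ℝ) : ℂ) * ψs ν v) →
      (∀ ν ν', ip (ψs ν) (ψs ν') = if ν = ν' then 1 else 0) →
      (∀ f : Vtx N → ℂ, (cubeLap N f = fun v => ((2 * (K : ℝ) : ℝ) : ℂ) * f v) →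
        f ∈ Submodule.span ℂ (Set.range ψs)) →
      ∀ F ∈ S3 N K m,
        ∑ ν, ‖ip F (Qslice N m (fun x => ψs ν x.1 / (Real.sqrt m : ℂ)))‖ ^ 2 =
          (1 / (m : ℝ)) * ∑ x, ‖Qslice N m F x‖ ^ 2) := by
  have hm0 : (m : ℝ) ≠ 0 := by
    have : 0 < m := by omega
    positivity
  refine ⟨?_, ?_, ?_⟩
  · apply Submodule.subset_span
    refine ⟨2 * K, le_rfl, ?_⟩
    funext x
    have := congrFun hψ x.1
    simp only [prodLap, cubeLap] at this ⊢
    simp only [← sub_div, ← Finset.sum_div]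
    rw [this]; ring
  · intro G hG
    have h := aux_eig_s16 N K m ψ hψ G hG
    have hL : ip (Qslice N m (fun x => ψ x.1 / (Real.sqrt m : ℂ))) G =
        (1 / (Real.sqrt m : ℂ)) * ip ψ (fun u => G (u, 0)) := by
      simp only [ip, Qslice, Fintype.sum_prod_type, ite_mul, zero_mul, Finset.sum_ite_eq',
        Finset.mem_univ, if_true, Finset.mul_sum]
      exact Finset.sum_congr rfl fun _ _ => by ring
    have hR : ip (fun x => ((1 / (m : ℝ) : ℝ) : ℂ) * (ψ x.1 / (Real.sqrt m : ℂ))) G =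
        ((1 / (m : ℝ) : ℝ) : ℂ) * (1 / (Real.sqrt m : ℂ)) *
          ∑ ℓ, ip ψ (fun u => G (u, ℓ)) := by
      simp only [ip, Fintype.sum_prod_type, Finset.mul_sum]
      rw [Finset.sum_comm]
      exact Finset.sum_congr rfl fun _ _ => Finset.sum_congr rfl fun _ _ => by ring
    rw [hL, hR]
    simp only [h, Finset.sum_const, Finset.card_univ, ZMod.card, nsmul_eq_mul]
    have hmc : (m : ℂ) ≠ 0 := by exact_mod_cast hm0
    push_cast
    field_simp
  · intro ψs _ horth hspan F hF
    obtain ⟨φ, hφ, rfl⟩ := aux_S3 N K m F hF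
    have hP := aux_parseval ψs (by intro i j; rw [horth]) φ (hspan φ hφ)
    have h1 : ∀ ν, ip (fun x : Vtx N × ZMod m => φ x.1)
        (Qslice N m (fun x => ψs ν x.1 / (Real.sqrt m : ℂ))) =
        ip φ (ψs ν) / (Real.sqrt m : ℂ) := by
      intro ν
      simp only [ip, Qslice, Fintype.sum_prod_type, apply_ite (starRingEnd ℂ), map_zero, mul_ite,
        mul_zero, Finset.sum_ite_eq', Finset.mem_univ, if_true, Finset.sum_div, map_div₀,
        Complex.conj_ofReal, mul_div_assoc]
    have h2 : ∑ x, ‖Qslice N m (fun x : Vtx N × ZMod m => φ x.1) x‖ ^ 2 = ∑ u, ‖φ u‖ ^ 2 := by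
      rw [Fintype.sum_prod_type]
      refine Finset.sum_congr rfl fun u _ => ?_
      rw [Finset.sum_eq_single 0]
      · simp [Qslice]
      · intro b _ hb; simp [Qslice, hb]
      · simp
    rw [h2, ← hP, Finset.mul_sum]
    refine Finset.sum_congr rfl fun ν _ => ?_
    rw [h1, norm_div, div_pow, Complex.norm_real, Real.norm_eq_abs, sq_abs,
      Real.sq_sqrt (Nat.cast_nonneg m)]
    ring
end
end
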